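/- Let T be a computable real number with 0 < T ≤ 1. Then the series Z(T) = ∑_{p ∈ dom U} 2^{−|p|/T} converges to a positive real number, and the free energy F(T) = −T·log₂ Z(T) is a right-computable real number which is weakly Chaitin T-random and T-compressible. -/

import Mathlib

open Filter

/-- A set of finite binary strings is prefix-free if no element of it is a
prefix of another (distinct) element of it. -/
def PrefixFree (S : Set (List Bool)) : Prop :=
  ∀ p ∈ S, ∀ q ∈ S, p <+: q → p = q

/-- A computer: a partial recursive function from finite binary strings to
finite binary strings whose domain is a prefix-free set. -/
structure Computer where
  f : List Bool →. List Bool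
  partrec : Partrec f
  prefixFree : PrefixFree {p | (f p).Dom}

/-- The domain of a computer. -/
def Computer.domain (C : Computer) : Set (List Bool) := {p | (C.f p).Dom}

/-- A computer `U` is optimal if every computer can be simulated on `U` with
only a constant increase in program length. -/
def IsOptimal (U : Computer) : Prop :=
  ∀ C : Computer, ∃ d : ℕ, ∀ p : List Bool, (C.f p).Dom →
    ∃ p' : List Bool, p'.length ≤ p.length + d ∧ ∀ s, s ∈ C.f p → s ∈ U.f p'

/-- Program-size complexity `H(s)`: the minimal length of a program `p`
with `U(p) = s`. -/
noncomputable def H (U : Computer) (s : List Bool) : ℕ :=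
  sInf {n | ∃ p : List Bool, p.length = n ∧ s ∈ U.f p}

/-- The `n`-th bit (`n ≥ 1`) of the base-two expansion of `x mod 1`
(the expansion chosen with infinitely many zeros). -/
noncomputable def binDigit (x : ℝ) (n : ℕ) : Bool :=
  decide (⌊Int.fract x * 2 ^ n⌋ % 2 = 1)

/-- The first `n` bits of the base-two expansion of `x mod 1` (with
infinitely many zeros). -/
noncomputable def bits (x : ℝ) (n : ℕ) : List Bool :=
  (List.range n).map fun i => binDigit x (i + 1)

/-- A real `x` is weakly Chaitin `D`-random (w.r.t. the computer `U`). -/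
def WeaklyChaitinRandom (U : Computer) (D x : ℝ) : Prop :=
  ∃ c : ℝ, ∀ n : ℕ, 1 ≤ n → D * n - c ≤ (H U (bits x n) : ℝ)

/-- A real `x` is Chaitin `D`-random (w.r.t. the computer `U`). -/
def ChaitinRandom (U : Computer) (D x : ℝ) : Prop :=
  Tendsto (fun n : ℕ => (H U (bits x n) : ℝ) - D * n) atTop atTop

/-- A real `x` is `D`-compressible (w.r.t. the computer `U`). -/
def DCompressible (U : Computer) (D x : ℝ) : Prop :=
  Filter.limsup (fun n : ℕ => (H U (bits x n) : ℝ) / n) atTop ≤ D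

/-- A computable real number. -/
def ComputableReal (T : ℝ) : Prop :=
  ∃ f : ℕ → ℚ, Computable f ∧ ∀ n : ℕ, 1 ≤ n → |T - (f n : ℝ)| < 1 / n

/-- A right-computable real number. -/
def RightComputable (T : ℝ) : Prop :=
  ∃ g : ℕ → ℚ, Computable g ∧ (∀ n, T ≤ (g n : ℝ)) ∧
    Tendsto (fun n => ((g n : ℚ) : ℝ)) atTop (nhds T)

/-- A left-computable real number. -/
def LeftComputable (T : ℝ) : Prop := RightComputable (-T)

/-- The term `2 ^ (-|p| / T)` of the partition function `Z(T)`. -/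
noncomputable def zterm (U : Computer) (T : ℝ) (p : U.domain) : ℝ :=
  (2 : ℝ) ^ (-((p : List Bool).length : ℝ) / T)

/-- The term `|p| ^ Q * 2 ^ (-|p| / T)` of `W(Q,T)`. -/
noncomputable def wterm (U : Computer) (Q T : ℝ) (p : U.domain) : ℝ :=
  ((p : List Bool).length : ℝ) ^ Q * (2 : ℝ) ^ (-((p : List Bool).length : ℝ) / T)

/-- The term `|p| * 2 ^ (-|p| / T)` of `W(1,T)`. -/
noncomputable def wlterm (U : Computer) (T : ℝ) (p : U.domain) : ℝ :=
  ((p : List Bool).length : ℝ) * (2 : ℝ) ^ (-((p : List Bool).length : ℝ) / T)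

/-- The term `|p| ^ 2 * 2 ^ (-|p| / T)` of `W(2,T)`. -/
noncomputable def wsqterm (U : Computer) (T : ℝ) (p : U.domain) : ℝ :=
  ((p : List Bool).length : ℝ) ^ 2 * (2 : ℝ) ^ (-((p : List Bool).length : ℝ) / T)

/-- A lower-computable function `f : ℕ⁺ → [0,∞)` (represented on `ℕ`,
with all conditions imposed on positive arguments). -/
def LowerComputableFun (f : ℕ → ℝ) : Prop :=
  ∃ a : ℕ → ℕ → ℚ, Computable₂ a ∧
    (∀ k n : ℕ, 1 ≤ k → 1 ≤ n → (a k n : ℝ) ≤ f n) ∧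
    (∀ n : ℕ, 1 ≤ n → Tendsto (fun k => ((a k n : ℚ) : ℝ)) atTop (nhds (f n)))

/-- A lower-computable semi-measure on finite binary strings. -/
def LowerComputableSemiMeasure (r : List Bool → ℝ) : Prop :=
  (∀ s, 0 ≤ r s) ∧ (∀ s, r s ≤ 1) ∧ Summable r ∧ (∑' s, r s) ≤ 1 ∧
    ∃ f : ℕ → List Bool → ℚ, Computable₂ f ∧
      (∀ n s, ((f n s : ℚ) : ℝ) ≤ r s) ∧
      (∀ s, Tendsto (fun n => ((f n s : ℚ) : ℝ)) atTop (nhds (r s)))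

/-- A universal probability. -/
def UniversalProbability (m : List Bool → ℝ) : Prop :=
  LowerComputableSemiMeasure m ∧
    ∀ r : List Bool → ℝ, LowerComputableSemiMeasure r →
      ∃ c : ℝ, 0 < c ∧ ∀ s, c * r s ≤ m s

/-!
Enumerate the domain of `U`, let `Z_k` and `Ω_k` be the partial sums of `Z(T)` and of the halting
probability `Ω = Z(1)`, and write `F = -T log₂ Z(T)`. As `T` is computable, comparisons of numbers
`2 ^ (-x / T)` with `x` dyadic are semidecidable, so that `F < x`, being equivalent to
`2 ^ (-x / T) < Z_k` for some `k`, is semidecidable as well: `F` is right-computable.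

The first `n` bits of `F` give a dyadic upper bound of `F` and hence a stage `k` with
`Z(T) - Z_k = O(2 ^ (-n))`. Every program `p` that halts after this stage has
`2 ^ (-|p| / T) = O(2 ^ (-n))`, that is `|p| ≥ T n - O(1)`, so any string that is not an output of
the first `k` computations has complexity at least `T n - O(1)`. This is weak randomness.

Conversely `m = T n + O(1)` bits of `Ω` give a stage with `Ω - Ω_k ≤ 2 ^ (-m)`. As
`∑ x_i ^ (1 / T) ≤ (∑ x_i) ^ (1 / T)`, at this stage `Z(T) - Z_k ≤ 2 ^ (-m / T) = O(2 ^ (-n))`, so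
that `n` bits of `F` are known up to a bounded correction. This is compressibility.
-/

section RecursivelyEnumerable

variable {α β : Type*} [Primcodable α] [Primcodable β]

theorem rePred_of_exists_computable₂ {p : α → Prop} {g : α → ℕ → Bool} (hg : Computable₂ g)
    (h : ∀ a, p a ↔ ∃ n, g a n = true) : REPred p :=
  (Partrec.rfind (p := fun a n => Part.some (g a n)) hg.partrec).dom_re.of_eq fun a =>
    Nat.rfind_dom.trans <| by
      simp only [h, Part.mem_some_iff, Part.some_dom, implies_true, and_true, eq_comm]

theorem rePred_iff_exists_primrec₂ {p : α → Prop} :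
    REPred p ↔ ∃ g : α → ℕ → Bool, Primrec₂ g ∧ ∀ a, p a ↔ ∃ n, g a n = true := by
  refine ⟨fun hp => ?_, fun ⟨g, hg, h⟩ => rePred_of_exists_computable₂ hg.to_comp h⟩
  obtain ⟨c, hc⟩ := Nat.Partrec.Code.exists_code.1 hp
  refine ⟨fun a n => (c.evaln n (Encodable.encode a)).isSome,
    Primrec.option_isSome.comp (Nat.Partrec.Code.primrec_evaln.comp
      ((Primrec.snd.pair (.const c)).pair (Primrec.encode.comp .fst))), fun a => ?_⟩
  have heval : c.eval (Encodable.encode a) =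
      (Part.assert (p a) fun _ => Part.some ()).map Encodable.encode := by
    simp [hc]
  calc p a ↔ ∃ x, x ∈ c.eval (Encodable.encode a) := by simp [heval]
    _ ↔ ∃ n, (c.evaln n (Encodable.encode a)).isSome := by
      simp only [Nat.Partrec.Code.evaln_complete, Option.isSome_iff_exists, Option.mem_def]
      exact exists_comm

theorem rePred_comp {p : β → Prop} (hp : REPred p) {f : α → β} (hf : Computable f) :
    REPred fun a => p (f a) :=
  Partrec.comp hp hf

theorem rePred_and {p q : α → Prop} (hp : REPred p) (hq : REPred q) :
    REPred fun a => p a ∧ q a := by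
  obtain ⟨g, hg, hgp⟩ := rePred_iff_exists_primrec₂.1 hp
  obtain ⟨h, hh, hhq⟩ := rePred_iff_exists_primrec₂.1 hq
  refine rePred_iff_exists_primrec₂.2
    ⟨fun a n => g a n.unpair.1 && h a n.unpair.2,
      Primrec.and.comp (hg.comp .fst (Primrec.fst.comp (Primrec.unpair.comp .snd)))
        (hh.comp .fst (Primrec.snd.comp (Primrec.unpair.comp .snd))), fun a => ?_⟩
  rw [hgp, hhq]
  constructor
  · rintro ⟨⟨m, hm⟩, n, hn⟩
    exact ⟨Nat.pair m n, by simp [hm, hn]⟩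
  · rintro ⟨n, hn⟩
    rw [Bool.and_eq_true] at hn
    exact ⟨⟨_, hn.1⟩, _, hn.2⟩

theorem exists_partrec_choice {p : α × β → Prop} (hp : REPred p) :
    ∃ f : α →. β, Partrec f ∧ (∀ a, ∀ b ∈ f a, p (a, b)) ∧ ∀ a b, p (a, b) → (f a).Dom := by
  obtain ⟨g, hg, hgp⟩ := rePred_iff_exists_primrec₂.1 hp
  let search (a : α) (n : ℕ) : Option β :=
    (Encodable.decode (α := β) n.unpair.1).bind fun b =>
      if g (a, b) n.unpair.2 then some b else none
  have hsearch : Primrec₂ search := by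
    refine Primrec.option_bind
      (Primrec.decode.comp (Primrec.fst.comp (Primrec.unpair.comp .snd)))
      (Primrec.ite (Primrec.eq.comp ?_ (.const true))
        (Primrec.option_some.comp .snd) (.const none))
    exact hg.comp ((Primrec.fst.comp .fst).pair .snd)
      (Primrec.snd.comp (Primrec.unpair.comp (Primrec.snd.comp .fst)))
  refine ⟨fun a => Nat.rfindOpt (search a), Partrec.rfindOpt hsearch.to_comp,
    fun a b hb => ?_, fun a b hab => ?_⟩
  · obtain ⟨n, hn⟩ := Nat.rfindOpt_spec hb
    obtain ⟨b', -, hb'⟩ := Option.mem_bind_iff.1 hn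
    split_ifs at hb' with h
    · obtain rfl := Option.some.inj hb'
      exact (hgp _).2 ⟨_, h⟩
    · cases hb'
  · obtain ⟨n, hn⟩ := (hgp _).1 hab
    exact Nat.rfindOpt_dom.2 ⟨Nat.pair (Encodable.encode b) n, b, by simp [search, hn]⟩

theorem rePred_exists {p : α × β → Prop} (hp : REPred p) : REPred fun a => ∃ b, p (a, b) := by
  obtain ⟨f, hf, hfp, hpf⟩ := exists_partrec_choice hp
  exact hf.dom_re.of_eq fun a =>
    ⟨fun h => ⟨_, hfp a _ (Part.get_mem h)⟩, fun ⟨b, hb⟩ => hpf a b hb⟩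

theorem computable_of_rePred_graph {f : α → β} (h : REPred fun x : α × β => f x.1 = x.2) :
    Computable f := by
  obtain ⟨g, hg, hgf, hfg⟩ := exists_partrec_choice h
  refine hg.of_eq fun a => ?_
  have hdom : (g a).Dom := hfg a (f a) rfl
  exact Part.eq_some_iff.2 ((hgf a _ (Part.get_mem hdom)) ▸ Part.get_mem hdom)

theorem rePred_mem_of_partrec {f : α →. β} (hf : Partrec f) :
    REPred fun x : α × β => x.2 ∈ f x.1 := by
  classical
  have htest : Partrec fun x : α × β =>
      (f x.1).bind fun b => ((if b = x.2 then some () else none : Option Unit) : Part Unit) :=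
    (hf.comp .fst).bind (Computable.ofOption (Primrec.ite
      (Primrec.eq.comp .snd (Primrec.snd.comp .fst)) (.const (some ())) (.const none)).to_comp)
  refine htest.dom_re.of_eq fun x => ?_
  rw [Part.dom_iff_mem]
  constructor
  · rintro ⟨u, hu⟩
    obtain ⟨b, hb, hbx⟩ := Part.mem_bind_iff.1 hu
    split_ifs at hbx with h
    · exact h ▸ hb
    · simp at hbx
  · exact fun hx => ⟨(), Part.mem_bind hx (by simp)⟩

theorem exists_primrec_injective_enumeration {p : α → Prop} (hp : REPred p) :
    ∃ e : ℕ → Option α, Primrec e ∧ (∀ a, p a ↔ ∃ n, e n = some a) ∧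
      ∀ m n a, e m = some a → e n = some a → m = n := by
  classical
  obtain ⟨g, hg, hgp⟩ := rePred_iff_exists_primrec₂.1 hp
  let IsLeastWitness (x : α × ℕ) : Prop := g x.1 x.2 ∧ ∀ k < x.2, ¬ g x.1 k
  have hleast : PrimrecPred IsLeastWitness := by
    have hg' : PrimrecRel fun (k : ℕ) (a : α) => ¬ g a k :=
      (PrimrecPred.not (Primrec.eq.comp (hg.comp .snd .fst) (.const true)))
    have hall : PrimrecPred fun x : α × ℕ => ∀ k ∈ List.range x.2, ¬ g x.1 k :=
      hg'.forall_mem_list.comp (Primrec.list_range.comp .snd) .fst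
    exact ((Primrec.eq.comp (hg.comp .fst .snd) (.const true)).and hall).of_eq fun x => by
      simp only [List.mem_range, IsLeastWitness]
  let e (n : ℕ) : Option α := (Encodable.decode₂ (α × ℕ) n).bind fun x =>
    if IsLeastWitness x then some x.1 else none
  have he_iff (n : ℕ) (a : α) :
      e n = some a ↔ ∃ k, n = Encodable.encode (a, k) ∧ IsLeastWitness (a, k) := by
    simp only [e, Option.bind_eq_some_iff, ← Option.mem_def (b := Encodable.decode₂ _ _),
      Encodable.mem_decode₂, Option.ite_none_right_eq_some, Option.some.injEq]
    constructor
    · rintro ⟨⟨a, k⟩, rfl, h, rfl⟩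
      exact ⟨k, rfl, h⟩
    · rintro ⟨k, rfl, h⟩
      exact ⟨(a, k), rfl, h, rfl⟩
  refine ⟨e, Primrec.option_bind Primrec.decode₂ (Primrec.ite (hleast.comp .snd)
    (Primrec.option_some.comp (Primrec.fst.comp .snd)) (.const none)), fun a => ?_, ?_⟩
  · simp only [hgp, he_iff]
    constructor
    · intro h
      exact ⟨_, Nat.find h, rfl, Nat.find_spec h, fun k hk => Nat.find_min h hk⟩
    · rintro ⟨-, k, -, hk, -⟩
      exact ⟨k, hk⟩
  · intro m n a hm hn
    obtain ⟨k, rfl, hk, hk'⟩ := (he_iff m a).1 hm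
    obtain ⟨l, rfl, hl, hl'⟩ := (he_iff n a).1 hn
    obtain rfl : k = l := le_antisymm (not_lt.1 fun h => hk' l h hl) (not_lt.1 fun h => hl' k h hk)
    rfl

theorem exists_computable_enumeration {p : α → Prop} (hp : REPred p) (hne : ∃ a, p a) :
    ∃ f : ℕ → α, Computable f ∧ (∀ n, p (f n)) ∧ ∀ a, p a → ∃ n, f n = a := by
  obtain ⟨a₀, ha₀⟩ := hne
  obtain ⟨e, he, hpe, -⟩ := exists_primrec_injective_enumeration hp
  refine ⟨fun n => (e n).getD a₀, (Primrec.option_getD.comp he (.const a₀)).to_comp,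
    fun n => ?_, fun a ha => ?_⟩
  · change p ((e n).getD a₀)
    cases hn : e n with
    | none => exact ha₀
    | some a => exact (hpe a).2 ⟨n, hn⟩
  · obtain ⟨n, hn⟩ := (hpe a).1 ha
    exact ⟨n, congrArg (·.getD a₀) hn⟩

end RecursivelyEnumerable

section RationalComputability

theorem nth_encode_ofEncodableOfInfinite {α : Type*} [Encodable α] [Infinite α] (a : α) :
    Nat.nth (· ∈ Set.range (Encodable.encode : α → ℕ))
      ((Denumerable.ofEncodableOfInfinite α).encode a) = Encodable.encode a := by
  classical
  have hinf := Set.infinite_range_of_injective (Encodable.encode_injective (α := α))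
  let _ : Infinite (Set.range (Encodable.encode : α → ℕ)) := hinf.to_subtype
  let _ := Encodable.decidableRangeEncode α
  let _ := Nat.Subtype.denumerable (Set.range (Encodable.encode : α → ℕ))
  rw [Nat.nth_eq_orderIsoOfNat (p := (· ∈ Set.range (Encodable.encode : α → ℕ))) hinf]
  exact congrArg Subtype.val (Nat.Subtype.orderIsoOfNat_apply.trans
    (Denumerable.ofNat_encode (Encodable.equivRangeEncode α a)))

theorem primrec_nat_count {p : ℕ → Prop} [DecidablePred p] (hp : PrimrecPred p) :
    Primrec (Nat.count p) :=
  (Primrec.list_length.comp ((Primrec.listFilter hp).comp Primrec.list_range)).of_eq fun n => by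
    rw [Nat.count_eq_card_filter_range]; rfl

/-- The `Primcodable` instance of `ℚ` numbers the rationals by their rank among the codes of pairs
of a numerator and a denominator; both are computable because the rank can be converted back into
the code. -/
theorem computable_encode_ofEncodableOfInfinite {α : Type*} [e : Encodable α] [Infinite α]
    (hrange : PrimrecPred (· ∈ Set.range e.encode)) :
    letI := @Primcodable.ofDenumerable α (Denumerable.ofEncodableOfInfinite α)
    Computable e.encode := by
  classical
  let _ := @Primcodable.ofDenumerable α (Denumerable.ofEncodableOfInfinite α)
  have hinf := Set.infinite_range_of_injective e.encode_injective
  have hgraph : PrimrecPred fun x : α × ℕ =>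
      x.2 ∈ Set.range e.encode ∧ Nat.count (· ∈ Set.range e.encode) x.2 =
        (Denumerable.ofEncodableOfInfinite α).encode x.1 :=
    (hrange.comp .snd).and
      (Primrec.eq.comp ((primrec_nat_count hrange).comp .snd) (Primrec.encode.comp .fst))
  refine computable_of_rePred_graph (hgraph.computablePred.to_re.of_eq fun x => ?_)
  constructor
  · rintro ⟨hx, hcount⟩
    rw [← nth_encode_ofEncodableOfInfinite, ← hcount, Nat.nth_count hx]
  · intro hx
    refine ⟨⟨_, hx⟩, ?_⟩
    rw [← hx, ← nth_encode_ofEncodableOfInfinite]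
    exact Nat.count_nth_of_infinite hinf _

theorem primrecRel_coprime : PrimrecRel Nat.Coprime := by
  have hdvd : PrimrecRel fun (k : ℕ) (x : ℕ × ℕ) => x.1 % k = 0 → x.2 % k = 0 → k = 1 := by
    have hmod₁ : PrimrecPred fun p : ℕ × ℕ × ℕ => p.2.1 % p.1 = 0 :=
      Primrec.eq.comp (Primrec.nat_mod.comp (Primrec.fst.comp .snd) .fst) (.const 0)
    have hmod₂ : PrimrecPred fun p : ℕ × ℕ × ℕ => p.2.2 % p.1 = 0 :=
      Primrec.eq.comp (Primrec.nat_mod.comp (Primrec.snd.comp .snd) .fst) (.const 0)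
    exact (hmod₁.not.or (hmod₂.not.or (Primrec.eq.comp .fst (.const 1)))).of_eq fun p => by
      simp only [imp_iff_not_or]
  have hall : PrimrecPred fun x : ℕ × ℕ =>
      ∀ k ∈ List.range (x.1 + x.2 + 1), x.1 % k = 0 → x.2 % k = 0 → k = 1 :=
    hdvd.forall_mem_list.comp (Primrec.list_range.comp (Primrec.succ.comp Primrec.nat_add)) .id
  refine hall.of_eq fun x => ⟨fun h => h (Nat.gcd x.1 x.2) ?_
    (Nat.mod_eq_zero_of_dvd (Nat.gcd_dvd_left _ _))
    (Nat.mod_eq_zero_of_dvd (Nat.gcd_dvd_right _ _)),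
    fun h k _ h₁ h₂ =>
      Nat.eq_one_of_dvd_coprimes h (Nat.dvd_of_mod_eq_zero h₁) (Nat.dvd_of_mod_eq_zero h₂)⟩
  rw [List.mem_range, Nat.lt_succ_iff]
  rcases Nat.eq_zero_or_pos x.1 with hx | hx
  · simp [hx]
  · exact (Nat.gcd_le_left _ hx).trans (Nat.le_add_right _ _)

theorem primrec_int_natCast : Primrec fun n : ℕ => (n : ℤ) :=
  Primrec.encode_iff.1 ((Primrec.nat_mul.comp (.const 2) .id).of_eq fun _ => rfl)

theorem primrec_int_toNat : Primrec Int.toNat := by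
  have : Primrec fun z : ℤ => if Encodable.encode z % 2 = 0 then Encodable.encode z / 2 else 0 :=
    Primrec.ite (Primrec.eq.comp (Primrec.nat_mod.comp .encode (.const 2)) (.const 0))
      (Primrec.nat_div.comp .encode (.const 2)) (.const 0)
  refine this.of_eq fun z => ?_
  cases z with
  | ofNat n => change (if 2 * n % 2 = 0 then 2 * n / 2 else 0) = n; simp
  | negSucc n => change (if (2 * n + 1) % 2 = 0 then _ else 0) = 0; simp

theorem primrec_int_natAbs : Primrec Int.natAbs := by
  refine (Primrec.nat_div.comp (Primrec.succ.comp .encode) (.const 2)).of_eq fun z => ?_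
  cases z with
  | ofNat n => change (2 * n + 1) / 2 = n; omega
  | negSucc n => change (2 * n + 1 + 1) / 2 = n + 1; omega

theorem primrecPred_mem_range_encode_rat :
    PrimrecPred (· ∈ Set.range Rat.instEncodable.encode) := by
  have hnum : Primrec fun x : ℕ => Denumerable.ofNat ℤ x.unpair.1 :=
    (Primrec.ofNat ℤ).comp (Primrec.fst.comp .unpair)
  have hden : Primrec fun x : ℕ => x.unpair.2 := Primrec.snd.comp .unpair
  refine ((Primrec.nat_lt.comp (.const 0) hden).and
    (primrecRel_coprime.comp (primrec_int_natAbs.comp hnum) hden)).of_eq fun x => ?_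
  constructor
  · rintro ⟨hpos, hcop⟩
    refine ⟨⟨Denumerable.ofNat ℤ x.unpair.1, x.unpair.2, hpos.ne', hcop⟩, ?_⟩
    change Nat.pair (Encodable.encode (Denumerable.ofNat ℤ x.unpair.1)) x.unpair.2 = x
    rw [Denumerable.encode_ofNat, Nat.pair_unpair]
  · rintro ⟨q, rfl⟩
    change 0 < (Nat.pair (Encodable.encode q.num) q.den).unpair.2 ∧
      (Denumerable.ofNat ℤ (Nat.pair (Encodable.encode q.num) q.den).unpair.1).natAbs.Coprime
        (Nat.pair (Encodable.encode q.num) q.den).unpair.2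
    rw [Nat.unpair_pair, Denumerable.ofNat_encode]
    exact ⟨q.pos, q.reduced⟩

theorem computable_rat_num : Computable Rat.num :=
  (((Primrec.ofNat ℤ).comp (Primrec.fst.comp .unpair)).to_comp.comp
    (computable_encode_ofEncodableOfInfinite primrecPred_mem_range_encode_rat)).of_eq fun q => by
      change Denumerable.ofNat ℤ (Nat.pair (Encodable.encode q.num) q.den).unpair.1 = q.num
      rw [Nat.unpair_pair, Denumerable.ofNat_encode]

theorem computable_rat_den : Computable Rat.den :=
  ((Primrec.snd.comp .unpair).to_comp.comp
    (computable_encode_ofEncodableOfInfinite primrecPred_mem_range_encode_rat)).of_eq fun q => by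
      change (Nat.pair (Encodable.encode q.num) q.den).unpair.2 = q.den
      rw [Nat.unpair_pair]

theorem computable_nat_div_succ : Computable fun x : ℕ × ℕ => (x.1 : ℚ) / (x.2 + 1) := by
  have hnum : Computable fun y : (ℕ × ℕ) × ℚ => y.2.num.toNat :=
    primrec_int_toNat.to_comp.comp (computable_rat_num.comp .snd)
  have hgraph : ComputablePred fun y : (ℕ × ℕ) × ℚ =>
      (y.2.num.toNat : ℤ) = y.2.num ∧ y.2.num.toNat * (y.1.2 + 1) = y.1.1 * y.2.den := by
    refine Computable.computablePred
      ((Primrec.and.to_comp.comp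
        (Primrec.eq.decide.to_comp.comp (primrec_int_natCast.to_comp.comp hnum)
          (computable_rat_num.comp .snd))
        (Primrec.eq.decide.to_comp.comp
          (Primrec.nat_mul.to_comp.comp hnum
            (Computable.succ.comp (Computable.snd.comp .fst)))
          (Primrec.nat_mul.to_comp.comp (Computable.fst.comp .fst)
            (computable_rat_den.comp .snd)))).of_eq fun y => (Bool.decide_and _ _).symm)
  refine computable_of_rePred_graph (hgraph.to_re.of_eq fun ⟨⟨a, b⟩, q⟩ => ?_)
  have hb : ((b : ℚ) + 1) ≠ 0 := by positivity
  change ((q.num.toNat : ℤ) = q.num ∧ q.num.toNat * (b + 1) = a * q.den) ↔ (a : ℚ) / (b + 1) = q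
  have hden : (q.den : ℚ) ≠ 0 := Nat.cast_ne_zero.2 q.den_nz
  constructor
  · rintro ⟨hnum, h⟩
    rw [← Rat.num_div_den q, ← hnum, Int.cast_natCast, div_eq_div_iff hb hden]
    exact_mod_cast h.symm
  · intro h
    have hnum : (q.num.toNat : ℤ) = q.num :=
      Int.toNat_of_nonneg (Rat.num_nonneg.2 (h ▸ by positivity))
    have hfrac : (a : ℚ) / (b + 1) = (q.num.toNat : ℕ) / q.den := by
      rw [h, ← Int.cast_natCast, hnum, Rat.num_div_den]
    rw [div_eq_div_iff hb hden] at hfrac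
    exact ⟨hnum, by exact_mod_cast hfrac.symm⟩

end RationalComputability

section ComputableReals

theorem ComputableReal.exists_nat_approx {T : ℝ} (hT : ComputableReal T) (hT₀ : 0 ≤ T) :
    ∃ a b : ℕ → ℕ, Computable a ∧ Computable b ∧ (∀ n, 0 < b n) ∧
      ∀ n : ℕ, |T - a n / b n| < 1 / (n + 1) := by
  obtain ⟨f, hf, hfT⟩ := hT
  have hfs : Computable fun n => f (n + 1) := hf.comp .succ
  refine ⟨fun n => (f (n + 1)).num.toNat, fun n => (f (n + 1)).den,
    primrec_int_toNat.to_comp.comp (computable_rat_num.comp hfs), computable_rat_den.comp hfs,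
    fun n => (f (n + 1)).pos, fun n => ?_⟩
  have happrox : |T - f (n + 1)| < 1 / (n + 1) := by
    simpa using hfT (n + 1) (Nat.le_add_left 1 n)
  have hmax : ((f (n + 1)).num.toNat : ℝ) / (f (n + 1)).den = max (f (n + 1) : ℝ) 0 := by
    have hden : (0 : ℝ) < (f (n + 1)).den := Nat.cast_pos.2 (f (n + 1)).pos
    rw [← Int.cast_natCast, Int.toNat_eq_max, Int.cast_max, Int.cast_zero,
      ← max_div_div_right hden.le, zero_div, Rat.cast_def]
  rw [hmax]
  calc |T - max (f (n + 1) : ℝ) 0| = |max T 0 - max (f (n + 1) : ℝ) 0| := by rw [max_eq_left hT₀]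
    _ ≤ |T - f (n + 1)| := abs_max_sub_max_le_abs _ _ _
    _ < 1 / (n + 1) := happrox

theorem ComputableReal.rePred_lt_mul {T : ℝ} (hT : ComputableReal T) (hT₀ : 0 ≤ T) :
    REPred fun x : ℕ × ℕ => (x.1 : ℝ) < x.2 * T := by
  obtain ⟨a, b, ha, hb, hbpos, hab⟩ := hT.exists_nat_approx hT₀
  refine rePred_of_exists_computable₂ (g := fun x n =>
    decide (x.1 * ((n + 1) * b n) + x.2 * b n < x.2 * ((n + 1) * a n))) ?_ fun ⟨u, v⟩ => ?_
  · exact Primrec.nat_lt.decide.to_comp.comp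
      (Primrec.nat_add.to_comp.comp
        (Primrec.nat_mul.to_comp.comp (Computable.fst.comp .fst)
          (Primrec.nat_mul.to_comp.comp (Computable.succ.comp .snd) (hb.comp .snd)))
        (Primrec.nat_mul.to_comp.comp (Computable.snd.comp .fst) (hb.comp .snd)))
      (Primrec.nat_mul.to_comp.comp (Computable.snd.comp .fst)
        (Primrec.nat_mul.to_comp.comp (Computable.succ.comp .snd) (ha.comp .snd)))
  have htest (n : ℕ) : (decide (u * ((n + 1) * b n) + v * b n < v * ((n + 1) * a n)) = true) ↔
      (u : ℝ) + v * (1 / (n + 1)) < v * (a n / b n) := by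
    have hbn : (0 : ℝ) < b n := Nat.cast_pos.2 (hbpos n)
    rw [decide_eq_true_eq, ← Nat.cast_lt (α := ℝ),
      ← div_lt_div_iff_of_pos_right (c := ((n : ℝ) + 1) * b n) (by positivity)]
    push_cast
    congr! 1 <;> field_simp
  simp only [htest]
  constructor
  · intro h
    have hv : 0 < 2 * (v : ℝ) + 1 := by positivity
    obtain ⟨n, hn⟩ := exists_nat_one_div_lt (div_pos (sub_pos.2 h) hv)
    rw [lt_div_iff₀ hv] at hn
    have hA := (abs_lt.1 (hab n)).2
    refine ⟨n, ?_⟩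
    nlinarith [Nat.cast_nonneg (α := ℝ) v, Nat.one_div_pos_of_nat (α := ℝ) (n := n)]
  · rintro ⟨n, hn⟩
    have hA := (abs_lt.1 (hab n)).1
    nlinarith [Nat.cast_nonneg (α := ℝ) v]

theorem ComputableReal.rePred_mul_lt {T : ℝ} (hT : ComputableReal T) (hT₀ : 0 ≤ T) :
    REPred fun x : ℕ × ℕ => x.1 * T < (x.2 : ℝ) := by
  obtain ⟨a, b, ha, hb, hbpos, hab⟩ := hT.exists_nat_approx hT₀
  refine rePred_of_exists_computable₂ (g := fun x n =>
    decide (x.1 * ((n + 1) * a n) + x.1 * b n < x.2 * ((n + 1) * b n))) ?_ fun ⟨v, u⟩ => ?_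
  · exact Primrec.nat_lt.decide.to_comp.comp
      (Primrec.nat_add.to_comp.comp
        (Primrec.nat_mul.to_comp.comp (Computable.fst.comp .fst)
          (Primrec.nat_mul.to_comp.comp (Computable.succ.comp .snd) (ha.comp .snd)))
        (Primrec.nat_mul.to_comp.comp (Computable.fst.comp .fst) (hb.comp .snd)))
      (Primrec.nat_mul.to_comp.comp (Computable.snd.comp .fst)
        (Primrec.nat_mul.to_comp.comp (Computable.succ.comp .snd) (hb.comp .snd)))
  have htest (n : ℕ) : (decide (v * ((n + 1) * a n) + v * b n < u * ((n + 1) * b n)) = true) ↔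
      v * (a n / b n) + v * (1 / (n + 1)) < (u : ℝ) := by
    have hbn : (0 : ℝ) < b n := Nat.cast_pos.2 (hbpos n)
    rw [decide_eq_true_eq, ← Nat.cast_lt (α := ℝ),
      ← div_lt_div_iff_of_pos_right (c := ((n : ℝ) + 1) * b n) (by positivity)]
    push_cast
    congr! 1 <;> field_simp
  simp only [htest]
  constructor
  · intro h
    have hv : 0 < 2 * (v : ℝ) + 1 := by positivity
    obtain ⟨n, hn⟩ := exists_nat_one_div_lt (div_pos (sub_pos.2 h) hv)
    rw [lt_div_iff₀ hv] at hn
    have hA := (abs_lt.1 (hab n)).1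
    refine ⟨n, ?_⟩
    nlinarith [Nat.cast_nonneg (α := ℝ) v, Nat.one_div_pos_of_nat (α := ℝ) (n := n)]
  · rintro ⟨n, hn⟩
    have hA := (abs_lt.1 (hab n)).2
    nlinarith [Nat.cast_nonneg (α := ℝ) v]

theorem exists_computable_running_min {α β : Type*} [Primcodable α] [LinearOrder β] {v : α → β}
    (hv : ComputablePred fun x : α × α => v x.1 < v x.2) {f : ℕ → α} (hf : Computable f) :
    ∃ g : ℕ → α, Computable g ∧ (∀ n, g n ∈ Set.range f) ∧ ∀ n, ∀ m ≤ n, v (g n) ≤ v (f m) := by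
  let step (k : ℕ) (y : α) : α := bif decide (v (f (k + 1)) < v y) then f (k + 1) else y
  have hstep : Computable fun p : ℕ × ℕ × α => step p.2.1 p.2.2 := by
    have hnext : Computable fun p : ℕ × ℕ × α => f (p.2.1 + 1) :=
      hf.comp (Computable.succ.comp (Computable.fst.comp .snd))
    have hcur : Computable fun p : ℕ × ℕ × α => p.2.2 := Computable.snd.comp .snd
    exact Computable.cond (hv.decide.comp (hnext.pair hcur)) hnext hcur
  let g (n : ℕ) : α := Nat.rec (f 0) step n
  have hg_succ (n : ℕ) : g (n + 1) = f (n + 1) ∧ v (f (n + 1)) < v (g n) ∨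
      g (n + 1) = g n ∧ v (g n) ≤ v (f (n + 1)) := by
    change step n (g n) = _ ∧ _ ∨ step n (g n) = _ ∧ _
    rcases lt_or_ge (v (f (n + 1))) (v (g n)) with h | h
    · simp [step, h]
    · simp [step, h, h.not_gt]
  refine ⟨g, ?_, fun n => ?_, fun n => ?_⟩
  · exact Computable.nat_rec .id (.const (f 0)) hstep.to₂
  · induction n with
    | zero => exact ⟨0, rfl⟩
    | succ n ih =>
      rcases hg_succ n with ⟨h, -⟩ | ⟨h, -⟩
      · exact ⟨n + 1, h.symm⟩
      · exact h ▸ ih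
  · induction n with
    | zero => exact fun m hm => by rw [Nat.le_zero.1 hm]; exact le_rfl
    | succ n ih =>
      intro m hm
      rcases hg_succ n with ⟨h, hlt⟩ | ⟨h, hle⟩ <;> rw [h]
      · rcases Nat.le_succ_iff.1 hm with hm | rfl
        · exact hlt.le.trans (ih m hm)
        · exact le_rfl
      · rcases Nat.le_succ_iff.1 hm with hm | rfl
        · exact ih m hm
        · exact hle

theorem primrec_nat_pow : Primrec₂ fun m n : ℕ => m ^ n :=
  Primrec₂.unpaired'.1 Nat.Primrec.pow

theorem primrec_two_pow : Primrec fun n : ℕ => 2 ^ n :=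
  primrec_nat_pow.comp (.const 2) .id

theorem exists_dyadic_btwn {x y : ℝ} (hx : 0 ≤ x) (hxy : x < y) :
    ∃ n a : ℕ, x < a / 2 ^ n ∧ a / 2 ^ n < y := by
  obtain ⟨n, hn⟩ := exists_pow_lt_of_lt_one (sub_pos.2 hxy) (one_half_lt_one (α := ℝ))
  have hpow : (0 : ℝ) < 2 ^ n := by positivity
  refine ⟨n, ⌊x * 2 ^ n⌋₊ + 1, ?_, ?_⟩
  · rw [lt_div_iff₀ hpow]
    exact_mod_cast Nat.lt_floor_add_one (x * 2 ^ n)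
  · have hfloor := Nat.floor_le (mul_nonneg hx hpow.le)
    rw [one_div, inv_pow, inv_lt_iff_one_lt_mul₀ hpow] at hn
    rw [div_lt_iff₀ hpow]
    push_cast
    linarith

theorem RightComputable.of_rePred_lt {x : ℝ} (hx : 0 ≤ x)
    (h : REPred fun y : ℕ × ℕ => x < y.2 / 2 ^ y.1) : RightComputable x := by
  obtain ⟨n₀, a₀, h₀, -⟩ := exists_dyadic_btwn hx (lt_add_one x)
  obtain ⟨f, hf, hfx, hxf⟩ := exists_computable_enumeration h ⟨(n₀, a₀), h₀⟩
  let val (y : ℕ × ℕ) : ℚ := y.2 / 2 ^ y.1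
  have hval : Computable val := by
    have hpred : Computable fun y : ℕ × ℕ => 2 ^ y.1 - 1 :=
      (Primrec.pred.comp (primrec_two_pow.comp .fst)).to_comp
    refine (computable_nat_div_succ.comp (Computable.snd.pair hpred)).of_eq fun y => ?_
    simp only [val]
    rw [Nat.cast_sub Nat.one_le_two_pow]
    simp
  have hlt : PrimrecPred fun z : (ℕ × ℕ) × (ℕ × ℕ) => val z.1 < val z.2 := by
    refine (Primrec.nat_lt.comp
      (Primrec.nat_mul.comp (Primrec.snd.comp .fst) (primrec_two_pow.comp (Primrec.fst.comp .snd)))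
      (Primrec.nat_mul.comp (Primrec.snd.comp .snd)
        (primrec_two_pow.comp (Primrec.fst.comp .fst)))).of_eq fun z => ?_
    rw [div_lt_div_iff₀ (by positivity) (by positivity)]
    exact_mod_cast Iff.rfl
  obtain ⟨g, hg, hgf, hmin⟩ := exists_computable_running_min hlt.computablePred hf
  have hxg (n : ℕ) : x < (val (g n) : ℚ) := by
    obtain ⟨m, hm⟩ := hgf n
    simpa [val, ← hm] using hfx m
  refine ⟨fun n => val (g n), hval.comp hg, fun n => (hxg n).le, ?_⟩
  refine tendsto_order.2 ⟨fun y hy => .of_forall fun n => hy.trans (hxg n), fun y hy => ?_⟩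
  obtain ⟨n, a, hxa, hay⟩ := exists_dyadic_btwn hx hy
  obtain ⟨m, hm⟩ := hxf (n, a) hxa
  filter_upwards [eventually_ge_atTop m] with k hk
  have hle : ((val (g k) : ℚ) : ℝ) ≤ (val (n, a) : ℚ) := by exact_mod_cast hm ▸ hmin k m hk
  exact hle.trans_lt (by simpa [val] using hay)

end ComputableReals

section PowerSums

theorem primrec_list_sum : Primrec (List.sum : List ℕ → ℕ) :=
  Primrec.list_foldr .id (.const 0)
    (Primrec.nat_add.comp (Primrec.fst.comp .snd) (Primrec.snd.comp .snd)).to₂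

/-- The power sum `∑ w ^ x` over the entries `x` of a list of exponents. -/
def powSum {R : Type*} [Semiring R] (w : R) (X : List ℕ) : R := (X.map (w ^ ·)).sum

theorem powSum_mono {v w : ℝ} (hv : 0 ≤ v) (hvw : v ≤ w) (X : List ℕ) : powSum v X ≤ powSum w X :=
  List.sum_le_sum fun x _ => pow_le_pow_left₀ hv hvw x

theorem continuous_powSum (X : List ℕ) : Continuous fun w : ℝ => powSum w X :=
  continuous_list_sum X fun x _ => continuous_pow x

/-- The numerator of `powSum (b / c) X` over the common denominator `c ^ X.sum`. -/
def powSumNum (X : List ℕ) (b c : ℕ) : ℕ := (X.map fun x => b ^ x * c ^ (X.sum - x)).sum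

theorem primrec_powSumNum : Primrec fun y : List ℕ × ℕ × ℕ => powSumNum y.1 y.2.1 y.2.2 := by
  have hX : Primrec fun z : (List ℕ × ℕ × ℕ) × ℕ => z.1.1.sum :=
    primrec_list_sum.comp (Primrec.fst.comp .fst)
  have hb : Primrec fun z : (List ℕ × ℕ × ℕ) × ℕ => z.1.2.1 :=
    Primrec.fst.comp (Primrec.snd.comp .fst)
  have hc : Primrec fun z : (List ℕ × ℕ × ℕ) × ℕ => z.1.2.2 :=
    Primrec.snd.comp (Primrec.snd.comp .fst)
  exact primrec_list_sum.comp (Primrec.list_map .fst (Primrec.nat_mul.comp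
    (primrec_nat_pow.comp hb .snd) (primrec_nat_pow.comp hc (Primrec.nat_sub.comp hX .snd))).to₂)

theorem cast_powSumNum (X : List ℕ) (b : ℕ) {c : ℕ} (hc : c ≠ 0) :
    (powSumNum X b c : ℝ) = powSum (b / c : ℝ) X * c ^ X.sum := by
  rw [powSumNum, powSum, ← List.sum_map_mul_right, Nat.cast_list_sum, List.map_map]
  congr 1
  refine List.map_congr_left fun x hx => ?_
  have hx : x ≤ X.sum := List.le_sum_of_mem hx
  have hc : (c : ℝ) ≠ 0 := Nat.cast_ne_zero.2 hc
  simp only [Function.comp_apply, Nat.cast_mul, Nat.cast_pow]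
  rw [div_pow, div_mul_eq_mul_div, eq_div_iff (pow_ne_zero x hc), mul_assoc, ← pow_add,
    Nat.sub_add_cancel hx]

theorem powSum_lt_powSum_iff_num (X Y : List ℕ) (b b' : ℕ) {c c' : ℕ} (hc : c ≠ 0) (hc' : c' ≠ 0) :
    powSum (b' / c' : ℝ) X < powSum (b / c : ℝ) Y ↔
      powSumNum X b' c' * c ^ Y.sum < powSumNum Y b c * c' ^ X.sum := by
  have hpos : (0 : ℝ) < c' ^ X.sum * c ^ Y.sum := by positivity
  rw [← Nat.cast_lt (α := ℝ)]
  push_cast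
  rw [cast_powSumNum X b' hc', cast_powSumNum Y b hc, mul_assoc, mul_assoc,
    mul_comm ((c : ℝ) ^ Y.sum), mul_lt_mul_iff_left₀ hpos]

theorem powSum_lt_powSum_iff_exists {w : ℝ} (hw : 0 < w) (X Y : List ℕ) :
    powSum w X < powSum w Y ↔ ∃ y : (ℕ × ℕ) × ℕ × ℕ,
      (y.1.1 < ((2 ^ y.1.2 : ℕ) : ℝ) * w ∧ ((2 ^ y.2.2 : ℕ) : ℝ) * w < y.2.1) ∧
        powSumNum X y.2.1 (2 ^ y.2.2) * (2 ^ y.1.2) ^ Y.sum <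
          powSumNum Y y.1.1 (2 ^ y.1.2) * (2 ^ y.2.2) ^ X.sum := by
  constructor
  · intro h
    obtain ⟨z, hXz, hzY⟩ := exists_between h
    obtain ⟨u', hwu', hu'⟩ := mem_nhdsGT_iff_exists_Ioo_subset.1 <| nhdsWithin_le_nhds <|
      (continuous_powSum X).continuousAt.eventually_lt_const hXz
    obtain ⟨u, huw, hu⟩ := (mem_nhdsLT_iff_exists_mem_Ico_Ioo_subset hw).1 <| nhdsWithin_le_nhds <|
      (continuous_powSum Y).continuousAt.eventually_const_lt hzY
    obtain ⟨p, b, hb⟩ := exists_dyadic_btwn huw.1 huw.2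
    obtain ⟨p', b', hb'⟩ := exists_dyadic_btwn hw.le hwu'
    have hX : powSum (b' / (2 ^ p' : ℕ) : ℝ) X < z := by exact_mod_cast hu' hb'
    have hY : z < powSum (b / (2 ^ p : ℕ) : ℝ) Y := by exact_mod_cast hu hb
    refine ⟨((b, p), b', p'), ⟨?_, ?_⟩, ?_⟩
    · exact_mod_cast (div_lt_iff₀' (by positivity)).1 hb.2
    · exact_mod_cast (lt_div_iff₀' (by positivity)).1 hb'.1
    · exact (powSum_lt_powSum_iff_num X Y b b' (by positivity) (by positivity)).1 (hX.trans hY)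
  · rintro ⟨⟨⟨b, p⟩, b', p'⟩, ⟨hb, hb'⟩, h⟩
    rw [← powSum_lt_powSum_iff_num X Y b b' (by positivity) (by positivity)] at h
    calc powSum w X ≤ powSum (b' / (2 ^ p' : ℕ) : ℝ) X :=
          powSum_mono hw.le ((le_div_iff₀' (by positivity)).2 hb'.le) X
      _ < powSum (b / (2 ^ p : ℕ) : ℝ) Y := h
      _ ≤ powSum w Y :=
          powSum_mono (by positivity) ((div_le_iff₀' (by positivity)).2 hb.le) Y

theorem rePred_powSum_lt {ι : Type*} [Primcodable ι] {w : ι → ℝ} (hw : ∀ i, 0 < w i)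
    (hlt : REPred fun y : ι × ℕ × ℕ => (y.2.1 : ℝ) < y.2.2 * w y.1)
    (hgt : REPred fun y : ι × ℕ × ℕ => y.2.2 * w y.1 < (y.2.1 : ℝ)) :
    REPred fun y : ι × List ℕ × List ℕ => powSum (w y.1) y.2.1 < powSum (w y.1) y.2.2 := by
  have hi : Primrec fun z : (ι × List ℕ × List ℕ) × (ℕ × ℕ) × ℕ × ℕ => z.1.1 :=
    Primrec.fst.comp .fst
  have hX : Primrec fun z : (ι × List ℕ × List ℕ) × (ℕ × ℕ) × ℕ × ℕ => z.1.2.1 :=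
    Primrec.fst.comp (Primrec.snd.comp .fst)
  have hY : Primrec fun z : (ι × List ℕ × List ℕ) × (ℕ × ℕ) × ℕ × ℕ => z.1.2.2 :=
    Primrec.snd.comp (Primrec.snd.comp .fst)
  have hb : Primrec fun z : (ι × List ℕ × List ℕ) × (ℕ × ℕ) × ℕ × ℕ => z.2.1.1 :=
    Primrec.fst.comp (Primrec.fst.comp .snd)
  have hc : Primrec fun z : (ι × List ℕ × List ℕ) × (ℕ × ℕ) × ℕ × ℕ => 2 ^ z.2.1.2 :=
    primrec_two_pow.comp (Primrec.snd.comp (Primrec.fst.comp .snd))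
  have hb' : Primrec fun z : (ι × List ℕ × List ℕ) × (ℕ × ℕ) × ℕ × ℕ => z.2.2.1 :=
    Primrec.fst.comp (Primrec.snd.comp .snd)
  have hc' : Primrec fun z : (ι × List ℕ × List ℕ) × (ℕ × ℕ) × ℕ × ℕ => 2 ^ z.2.2.2 :=
    primrec_two_pow.comp (Primrec.snd.comp (Primrec.snd.comp .snd))
  have hnum := Primrec.nat_lt.comp
    (Primrec.nat_mul.comp (primrec_powSumNum.comp (hX.pair (hb'.pair hc')))
      (primrec_nat_pow.comp hc (primrec_list_sum.comp hY)))
    (Primrec.nat_mul.comp (primrec_powSumNum.comp (hY.pair (hb.pair hc)))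
      (primrec_nat_pow.comp hc' (primrec_list_sum.comp hX)))
  exact (rePred_exists (rePred_and
    (rePred_and (rePred_comp hlt (hi.pair (hb.pair hc)).to_comp)
      (rePred_comp hgt (hi.pair (hb'.pair hc')).to_comp))
    hnum.computablePred.to_re)).of_eq fun y =>
      (powSum_lt_powSum_iff_exists (hw y.1) y.2.1 y.2.2).symm

end PowerSums

section Boltzmann

/-- The Boltzmann weight `2 ^ (-x / T)` of a state of energy `x` at temperature `T`. -/
noncomputable def boltzmann (T x : ℝ) : ℝ := 2 ^ (-x / T)

variable {T : ℝ}

theorem boltzmann_pos (T x : ℝ) : 0 < boltzmann T x := Real.rpow_pos_of_pos two_pos _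

theorem boltzmann_zero (T : ℝ) : boltzmann T 0 = 1 := by simp [boltzmann]

theorem boltzmann_add (T x y : ℝ) : boltzmann T (x + y) = boltzmann T x * boltzmann T y := by
  rw [boltzmann, neg_add, add_div, Real.rpow_add two_pos, boltzmann, boltzmann]

theorem boltzmann_pow (T x : ℝ) (n : ℕ) : boltzmann T x ^ n = boltzmann T (n * x) := by
  rw [boltzmann, boltzmann, ← Real.rpow_natCast, ← Real.rpow_mul two_pos.le]
  ring_nf

theorem boltzmann_lt_boltzmann (hT : 0 < T) {x y : ℝ} :
    boltzmann T x < boltzmann T y ↔ y < x := by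
  rw [boltzmann, boltzmann, Real.rpow_lt_rpow_left_iff one_lt_two, div_lt_div_iff_of_pos_right hT,
    neg_lt_neg_iff]

theorem boltzmann_le_boltzmann (hT : 0 < T) {x y : ℝ} :
    boltzmann T x ≤ boltzmann T y ↔ y ≤ x :=
  le_iff_le_iff_lt_iff_lt.2 (boltzmann_lt_boltzmann hT)

theorem boltzmann_one_natCast (n : ℕ) : boltzmann 1 n = (1 / 2) ^ n := by
  rw [boltzmann, div_one, Real.rpow_neg two_pos.le, Real.rpow_natCast, one_div, inv_pow]

theorem boltzmann_mul_self (hT : T ≠ 0) (x : ℝ) : boltzmann T (T * x) = boltzmann 1 x := by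
  rw [boltzmann, boltzmann, ← mul_neg, mul_div_cancel_left₀ _ hT, div_one]

theorem boltzmann_neg_mul_logb (hT : T ≠ 0) {z : ℝ} (hz : 0 < z) :
    boltzmann T (-T * Real.logb 2 z) = z := by
  rw [boltzmann, neg_mul, neg_neg, mul_div_cancel_left₀ _ hT,
    Real.rpow_logb two_pos (by norm_num) hz]

theorem one_sub_boltzmann_le (hT : 0 ≤ T) {x : ℝ} (hx : 0 ≤ x) : 1 - boltzmann T x ≤ x / T := by
  have hexp := Real.add_one_le_exp (Real.log 2 * (-x / T))
  have hlog : Real.log 2 * (x / T) ≤ x / T :=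
    mul_le_of_le_one_left (div_nonneg hx hT) (by linarith [Real.log_two_lt_d9])
  rw [boltzmann, Real.rpow_def_of_pos two_pos]
  rw [neg_div] at hexp ⊢
  linarith

theorem two_pow_mul_boltzmann_pow (T : ℝ) {K : ℕ} (hK : 0 < K) (v u : ℕ) :
    2 ^ v * boltzmann T (1 / K) ^ (K * u) = (2 : ℝ) ^ (v - u / T) := by
  have hK : (K : ℝ) ≠ 0 := (Nat.cast_pos.2 hK).ne'
  rw [boltzmann_pow, boltzmann, ← Real.rpow_natCast, ← Real.rpow_add two_pos, Nat.cast_mul,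
    mul_comm (K : ℝ), mul_assoc, mul_one_div_cancel hK, mul_one, neg_div, sub_eq_add_neg]

theorem exists_pow_mul_lt_half {r : ℝ} (hr₀ : 0 ≤ r) (hr₁ : r < 1) {K : ℕ} (hK : 0 < K) :
    ∃ u : ℕ, r ^ (K * u) < 1 / 2 := by
  obtain ⟨u, hu⟩ := exists_pow_lt_of_lt_one one_half_pos hr₁
  exact ⟨u, (pow_le_pow_of_le_one hr₀ hr₁.le (Nat.le_mul_of_pos_left u hK)).trans_lt hu⟩

/-- As `boltzmann T (1 / K) ^ (K * u) = 2 ^ (-u / T)`, a power of two below `2 ^ (u / T)` can stand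
for `boltzmann T (1 / K) ^ -(K * u)`; the error factor of at most two is absorbed by a large `u`. -/
theorem lt_mul_boltzmann_iff (hT : 0 < T) {K : ℕ} (hK : 0 < K) (b c : ℕ) :
    (b : ℝ) < c * boltzmann T (1 / K) ↔
      ∃ y : ℕ × ℕ, (y.1 : ℝ) < y.2 * T ∧ 2 ^ y.2 * b ^ (K * y.1) < c ^ (K * y.1) := by
  have hw := boltzmann_pos T (1 / K)
  have hpow (v u : ℕ) := two_pow_mul_boltzmann_pow T hK v u
  set w := boltzmann T (1 / K)
  constructor
  · intro h
    have hcw : 0 < c * w := b.cast_nonneg.trans_lt h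
    obtain ⟨u, hu⟩ := exists_pow_mul_lt_half (by positivity) ((div_lt_one hcw).2 h) hK
    have hc : (0 : ℝ) < c := pos_of_mul_pos_left hcw hw.le
    have hfloor := Nat.floor_le (div_nonneg u.cast_nonneg hT.le)
    refine ⟨(u, ⌊u / T⌋₊ + 1), ?_, ?_⟩
    · exact_mod_cast (div_lt_iff₀ hT).1 (Nat.lt_floor_add_one (u / T))
    · have htwo : (2 : ℝ) ^ (⌊u / T⌋₊ + 1) * w ^ (K * u) ≤ 2 := by
        rw [hpow]
        exact Real.rpow_le_self_of_one_le one_le_two (by push_cast; linarith)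
      have hreal : (2 : ℝ) ^ (⌊u / T⌋₊ + 1) * b ^ (K * u) < c ^ (K * u) :=
        calc (2 : ℝ) ^ (⌊u / T⌋₊ + 1) * b ^ (K * u)
          _ = 2 ^ (⌊u / T⌋₊ + 1) * w ^ (K * u) * (b / (c * w)) ^ (K * u) * c ^ (K * u) := by
            rw [div_pow, mul_pow]
            field_simp
          _ ≤ 2 * (b / (c * w)) ^ (K * u) * c ^ (K * u) := by gcongr
          _ < c ^ (K * u) := mul_lt_of_lt_one_left (by positivity) (by linarith)
      exact_mod_cast hreal
  · rintro ⟨⟨u, v⟩, huv, h⟩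
    have hone : 1 ≤ (2 : ℝ) ^ v * w ^ (K * u) := by
      rw [hpow]
      exact Real.one_le_rpow one_le_two (sub_nonneg.2 ((div_lt_iff₀ hT).2 huv).le)
    refine lt_of_pow_lt_pow_left₀ (K * u) (by positivity) ?_
    refine lt_of_mul_lt_mul_left ?_ (by positivity : (0 : ℝ) ≤ 2 ^ v)
    calc (2 : ℝ) ^ v * b ^ (K * u) < c ^ (K * u) := by exact_mod_cast h
      _ ≤ 2 ^ v * w ^ (K * u) * c ^ (K * u) := le_mul_of_one_le_left (by positivity) hone
      _ = 2 ^ v * (c * w) ^ (K * u) := by rw [mul_pow]; ring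

theorem mul_boltzmann_lt_iff (hT : 0 < T) {K : ℕ} (hK : 0 < K) (b c : ℕ) :
    c * boltzmann T (1 / K) < (b : ℝ) ↔
      ∃ y : ℕ × ℕ, y.1 * T < (y.2 : ℝ) ∧ c ^ (K * y.2) < 2 ^ y.1 * b ^ (K * y.2) := by
  have hw := boltzmann_pos T (1 / K)
  have hpow (v u : ℕ) := two_pow_mul_boltzmann_pow T hK v u
  set w := boltzmann T (1 / K)
  constructor
  · intro h
    have hb : (0 : ℝ) < b := (by positivity : 0 ≤ c * w).trans_lt h
    obtain ⟨u, hu⟩ := exists_pow_mul_lt_half (by positivity) ((div_lt_one hb).2 h) hK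
    have hu₀ : 0 < u := Nat.pos_of_ne_zero fun hu₀ => by norm_num [hu₀] at hu
    have hceil : ((⌈u / T⌉₊ - 1 : ℕ) : ℝ) = ⌈u / T⌉₊ - 1 := by
      rw [Nat.cast_pred (Nat.ceil_pos.2 (by positivity))]
    refine ⟨(⌈u / T⌉₊ - 1, u), ?_, ?_⟩
    · have := Nat.ceil_lt_add_one (by positivity : 0 ≤ u / T)
      exact (lt_div_iff₀ hT).1 (by linarith)
    · have htwo : 1 / 2 ≤ (2 : ℝ) ^ (⌈u / T⌉₊ - 1) * w ^ (K * u) := by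
        rw [hpow, one_div, ← Real.rpow_neg_one]
        exact Real.rpow_le_rpow_of_exponent_le one_le_two (by linarith [Nat.le_ceil (u / T)])
      have hreal : (c : ℝ) ^ (K * u) < 2 ^ (⌈u / T⌉₊ - 1) * b ^ (K * u) := by
        refine lt_of_mul_lt_mul_left ?_ (by positivity : 0 ≤ w ^ (K * u))
        calc w ^ (K * u) * c ^ (K * u) = (c * w / b) ^ (K * u) * b ^ (K * u) := by
              rw [← mul_pow, ← mul_pow, div_mul_cancel₀ _ hb.ne', mul_comm]
          _ < 2 ^ (⌈u / T⌉₊ - 1) * w ^ (K * u) * b ^ (K * u) := by gcongr; exact hu.trans_le htwo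
          _ = w ^ (K * u) * (2 ^ (⌈u / T⌉₊ - 1) * b ^ (K * u)) := by ring
      exact_mod_cast hreal
  · rintro ⟨⟨v, u⟩, hvu, h⟩
    have hone : (2 : ℝ) ^ v * w ^ (K * u) ≤ 1 := by
      rw [hpow]
      exact Real.rpow_le_one_of_one_le_of_nonpos one_le_two
        (sub_nonpos.2 ((lt_div_iff₀ hT).2 hvu).le)
    refine lt_of_pow_lt_pow_left₀ (K * u) (by positivity) ?_
    calc (c * w) ^ (K * u) = c ^ (K * u) * w ^ (K * u) := mul_pow ..
      _ < 2 ^ v * b ^ (K * u) * w ^ (K * u) := by gcongr; exact_mod_cast h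
      _ = 2 ^ v * w ^ (K * u) * b ^ (K * u) := by ring
      _ ≤ b ^ (K * u) := mul_le_of_le_one_left (by positivity) hone

theorem ComputableReal.rePred_lt_mul_boltzmann (hT : ComputableReal T) (hT₀ : 0 < T) :
    REPred fun y : ℕ × ℕ × ℕ => (y.2.1 : ℝ) < y.2.2 * boltzmann T (1 / (2 ^ y.1 : ℕ)) := by
  have hb : Primrec fun z : (ℕ × ℕ × ℕ) × ℕ × ℕ => z.1.2.1 :=
    Primrec.fst.comp (Primrec.snd.comp .fst)
  have hc : Primrec fun z : (ℕ × ℕ × ℕ) × ℕ × ℕ => z.1.2.2 :=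
    Primrec.snd.comp (Primrec.snd.comp .fst)
  have hu : Primrec fun z : (ℕ × ℕ × ℕ) × ℕ × ℕ => z.2.1 := Primrec.fst.comp .snd
  have hv : Primrec fun z : (ℕ × ℕ × ℕ) × ℕ × ℕ => z.2.2 := Primrec.snd.comp .snd
  have hpow : Primrec fun z : (ℕ × ℕ × ℕ) × ℕ × ℕ => 2 ^ z.1.1 * z.2.1 :=
    Primrec.nat_mul.comp (primrec_two_pow.comp (Primrec.fst.comp .fst)) hu
  have htest := Primrec.nat_lt.comp
    (Primrec.nat_mul.comp (primrec_two_pow.comp hv) (primrec_nat_pow.comp hb hpow))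
    (primrec_nat_pow.comp hc hpow)
  exact (rePred_exists (rePred_and
    (rePred_comp (hT.rePred_lt_mul hT₀.le) (hu.pair hv).to_comp) htest.computablePred.to_re)).of_eq
    fun y => (lt_mul_boltzmann_iff hT₀ (Nat.two_pow_pos y.1) y.2.1 y.2.2).symm

theorem ComputableReal.rePred_mul_boltzmann_lt (hT : ComputableReal T) (hT₀ : 0 < T) :
    REPred fun y : ℕ × ℕ × ℕ => y.2.2 * boltzmann T (1 / (2 ^ y.1 : ℕ)) < (y.2.1 : ℝ) := by
  have hb : Primrec fun z : (ℕ × ℕ × ℕ) × ℕ × ℕ => z.1.2.1 :=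
    Primrec.fst.comp (Primrec.snd.comp .fst)
  have hc : Primrec fun z : (ℕ × ℕ × ℕ) × ℕ × ℕ => z.1.2.2 :=
    Primrec.snd.comp (Primrec.snd.comp .fst)
  have hv : Primrec fun z : (ℕ × ℕ × ℕ) × ℕ × ℕ => z.2.1 := Primrec.fst.comp .snd
  have hu : Primrec fun z : (ℕ × ℕ × ℕ) × ℕ × ℕ => z.2.2 := Primrec.snd.comp .snd
  have hpow : Primrec fun z : (ℕ × ℕ × ℕ) × ℕ × ℕ => 2 ^ z.1.1 * z.2.2 :=
    Primrec.nat_mul.comp (primrec_two_pow.comp (Primrec.fst.comp .fst)) hu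
  have htest := Primrec.nat_lt.comp (primrec_nat_pow.comp hc hpow)
    (Primrec.nat_mul.comp (primrec_two_pow.comp hv) (primrec_nat_pow.comp hb hpow))
  exact (rePred_exists (rePred_and
    (rePred_comp (hT.rePred_mul_lt hT₀.le) (hv.pair hu).to_comp) htest.computablePred.to_re)).of_eq
    fun y => (mul_boltzmann_lt_iff hT₀ (Nat.two_pow_pos y.1) y.2.1 y.2.2).symm

variable (T) in
/-- The sum of the Boltzmann weights of the energies `x / 2 ^ n` for `x` in a list. -/
noncomputable def boltzmannSum (n : ℕ) (X : List ℕ) : ℝ :=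
  (X.map fun x : ℕ => boltzmann T (x / 2 ^ n)).sum

theorem boltzmannSum_eq_powSum (T : ℝ) (n : ℕ) (X : List ℕ) :
    boltzmannSum T n X = powSum (boltzmann T (1 / (2 ^ n : ℕ))) X := by
  simp only [boltzmannSum, powSum, boltzmann_pow, mul_one_div, Nat.cast_pow, Nat.cast_ofNat]

theorem boltzmannSum_singleton (T : ℝ) (n x : ℕ) :
    boltzmannSum T n [x] = boltzmann T (x / 2 ^ n) := by
  simp [boltzmannSum]

theorem boltzmannSum_map_two_pow_mul_add (T : ℝ) (n j : ℕ) (X : List ℕ) :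
    boltzmannSum T n (X.map fun x : ℕ => 2 ^ n * x + j) =
      boltzmann T (j / 2 ^ n) * boltzmannSum T 0 X := by
  rw [boltzmannSum, boltzmannSum, ← List.sum_map_mul_left, List.map_map]
  congr 1
  refine List.map_congr_left fun x _ => ?_
  simp only [Function.comp_apply, ← boltzmann_add]
  congr 1
  push_cast
  field_simp
  ring

theorem ComputableReal.rePred_boltzmannSum_lt (hT : ComputableReal T) (hT₀ : 0 < T) :
    REPred fun y : ℕ × List ℕ × List ℕ => boltzmannSum T y.1 y.2.1 < boltzmannSum T y.1 y.2.2 := by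
  simp only [boltzmannSum_eq_powSum]
  exact rePred_powSum_lt (w := fun n => boltzmann T (1 / (2 ^ n : ℕ)))
    (fun n => boltzmann_pos T _) (hT.rePred_lt_mul_boltzmann hT₀)
    (hT.rePred_mul_boltzmann_lt hT₀)

end Boltzmann

section PartitionFunction

theorem PrefixFree.uniquelyDecodable {S : Set (List Bool)} (hS : PrefixFree S) (hnil : [] ∉ S) :
    InformationTheory.UniquelyDecodable S := by
  have hne {w : List Bool} (hw : w ∈ S) : w ≠ [] := fun h => hnil (h ▸ hw)
  intro L₁
  induction L₁ with
  | nil =>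
    rintro (_ | ⟨b, L₂⟩) - h₂ h
    · rfl
    · exact absurd (List.append_eq_nil_iff.1 h.symm).1 (hne (h₂ b List.mem_cons_self))
  | cons a L₁ ih =>
    rintro (_ | ⟨b, L₂⟩) h₁ h₂ h
    · exact absurd (List.append_eq_nil_iff.1 h).1 (hne (h₁ a List.mem_cons_self))
    · have ha := h₁ a List.mem_cons_self
      have hb := h₂ b List.mem_cons_self
      simp only [List.flatten_cons] at h
      obtain rfl : a = b := by
        rcases List.prefix_or_prefix_of_prefix (List.prefix_append a L₁.flatten)
          (h ▸ List.prefix_append b L₂.flatten) with hab | hba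
        · exact hS a ha b hb hab
        · exact (hS b hb a ha hba).symm
      rw [ih L₂ (fun w hw => h₁ w (List.mem_cons_of_mem a hw))
        (fun w hw => h₂ w (List.mem_cons_of_mem a hw)) (List.append_cancel_left h)]

theorem PrefixFree.sum_half_pow_length_le_one {S : Finset (List Bool)}
    (hS : PrefixFree (S : Set (List Bool))) : ∑ w ∈ S, (1 / 2 : ℝ) ^ w.length ≤ 1 := by
  by_cases hnil : [] ∈ S
  · have hsingle : S = {[]} := Finset.eq_singleton_iff_unique_mem.2
      ⟨hnil, fun w hw => (hS [] hnil w hw List.nil_prefix).symm⟩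
    simp [hsingle]
  · simpa using InformationTheory.kraft_mcmillan_inequality (hS.uniquelyDecodable hnil)

section RpowSums

variable {ι : Type*} {f : ι → ℝ} {r : ℝ}

theorem sum_rpow_le_rpow_sum (hf : ∀ i, 0 ≤ f i) (hr : 1 ≤ r) (s : Finset ι) :
    ∑ i ∈ s, f i ^ r ≤ (∑ i ∈ s, f i) ^ r := by
  induction s using Finset.cons_induction with
  | empty => simp [Real.zero_rpow (zero_lt_one.trans_le hr).ne']
  | cons i s hi ih =>
    rw [Finset.sum_cons, Finset.sum_cons]
    exact (add_le_add_right ih _).trans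
      (Real.add_rpow_le_rpow_add (hf i) (Finset.sum_nonneg fun j _ => hf j) hr)

theorem summable_rpow_of_one_le (hf : ∀ i, 0 ≤ f i) (hr : 1 ≤ r) (hsum : Summable f) :
    Summable fun i => f i ^ r :=
  summable_of_sum_le (fun i => Real.rpow_nonneg (hf i) r) fun s =>
    (sum_rpow_le_rpow_sum hf hr s).trans <| Real.rpow_le_rpow (Finset.sum_nonneg fun i _ => hf i)
      (hsum.sum_le_tsum s fun i _ => hf i) (zero_le_one.trans hr)

theorem tsum_rpow_le_sum_add_rpow (hf : ∀ i, 0 ≤ f i) (hr : 1 ≤ r) (hsum : Summable f)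
    (s : Finset ι) : ∑' i, f i ^ r ≤ ∑ i ∈ s, f i ^ r + (∑' i, f i - ∑ i ∈ s, f i) ^ r := by
  classical
  refine (summable_rpow_of_one_le hf hr hsum).tsum_le_of_sum_le fun t => ?_
  have htail : ∑ i ∈ t \ s, f i ≤ ∑' i, f i - ∑ i ∈ s, f i := by
    rw [le_sub_iff_add_le, ← Finset.sum_union Finset.sdiff_disjoint]
    exact hsum.sum_le_tsum _ fun i _ => hf i
  calc ∑ i ∈ t, f i ^ r ≤ ∑ i ∈ s ∪ t \ s, f i ^ r :=
        Finset.sum_le_sum_of_subset_of_nonneg (by simp) fun i _ _ => Real.rpow_nonneg (hf i) r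
    _ = ∑ i ∈ s, f i ^ r + ∑ i ∈ t \ s, f i ^ r := Finset.sum_union Finset.disjoint_sdiff
    _ ≤ ∑ i ∈ s, f i ^ r + (∑ i ∈ t \ s, f i) ^ r := by
        gcongr
        exact sum_rpow_le_rpow_sum hf hr _
    _ ≤ ∑ i ∈ s, f i ^ r + (∑' i, f i - ∑ i ∈ s, f i) ^ r := by
        gcongr
        exact Finset.sum_nonneg fun i _ => hf i

end RpowSums

variable (U : Computer) {T : ℝ}

theorem zterm_pos (T : ℝ) (p : U.domain) : 0 < zterm U T p := boltzmann_pos T _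

theorem zterm_eq_rpow (p : U.domain) : zterm U T p = zterm U 1 p ^ (1 / T) := by
  rw [zterm, zterm, ← Real.rpow_mul two_pos.le, div_one, mul_one_div]

theorem sum_zterm_one_le_one (s : Finset U.domain) : ∑ p ∈ s, zterm U 1 p ≤ 1 := by
  have hpf : PrefixFree (s.map (Function.Embedding.subtype (· ∈ U.domain)) : Set (List Bool)) := by
    intro p hp q hq
    obtain ⟨p, -, rfl⟩ := Finset.mem_map.1 hp
    obtain ⟨q, -, rfl⟩ := Finset.mem_map.1 hq
    exact U.prefixFree p p.2 q q.2
  calc ∑ p ∈ s, zterm U 1 p = ∑ p ∈ s, (1 / 2 : ℝ) ^ (p : List Bool).length :=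
        Finset.sum_congr rfl fun p _ => boltzmann_one_natCast _
    _ ≤ 1 := by simpa using hpf.sum_half_pow_length_le_one

theorem summable_zterm_one : Summable (zterm U 1) :=
  summable_of_sum_le (fun p => (zterm_pos U 1 p).le) (sum_zterm_one_le_one U)

theorem tsum_zterm_one_le_one : ∑' p, zterm U 1 p ≤ 1 :=
  (summable_zterm_one U).tsum_le_of_sum_le (sum_zterm_one_le_one U)

theorem summable_zterm (hT₀ : 0 < T) (hT₁ : T ≤ 1) : Summable (zterm U T) :=
  (summable_rpow_of_one_le (fun p => (zterm_pos U 1 p).le) ((one_le_div hT₀).2 hT₁)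
    (summable_zterm_one U)).congr fun p => (zterm_eq_rpow U p).symm

theorem tsum_zterm_le_sum_add_rpow (hT₀ : 0 < T) (hT₁ : T ≤ 1) (s : Finset U.domain) :
    ∑' p, zterm U T p ≤
      ∑ p ∈ s, zterm U T p + (∑' p, zterm U 1 p - ∑ p ∈ s, zterm U 1 p) ^ (1 / T) := by
  simp only [zterm_eq_rpow U (T := T)]
  exact tsum_rpow_le_sum_add_rpow (fun p => (zterm_pos U 1 p).le) ((one_le_div hT₀).2 hT₁)
    (summable_zterm_one U) s

theorem tsum_zterm_le_one (hT₀ : 0 < T) (hT₁ : T ≤ 1) : ∑' p, zterm U T p ≤ 1 := by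
  refine (tsum_zterm_le_sum_add_rpow U hT₀ hT₁ ∅).trans ?_
  rw [Finset.sum_empty, Finset.sum_empty, zero_add, sub_zero]
  exact Real.rpow_le_one (tsum_nonneg fun p => (zterm_pos U 1 p).le) (tsum_zterm_one_le_one U)
    (by positivity)

end PartitionFunction

section ProgramSize

variable {U : Computer}

theorem H_le_length {s p : List Bool} (h : s ∈ U.f p) : H U s ≤ p.length :=
  Nat.sInf_le ⟨p, rfl, h⟩

theorem exists_computer_of_prefix_code {α : Type*} [Primcodable α] {code : α → List Bool}
    (hcode : Computable code) (hinj : ∀ a b, code a <+: code b → a = b)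
    {g : α →. List Bool} (hg : Partrec g) :
    ∃ C : Computer, ∀ a, ∀ s ∈ g a, s ∈ C.f (code a) := by
  have hgraph : REPred fun x : List Bool × α => code x.2 = x.1 :=
    rePred_comp (PrimrecPred.computablePred Primrec.eq).to_re ((hcode.comp .snd).pair .fst)
  obtain ⟨dec, hdec, hdec_code, hdom⟩ := exists_partrec_choice hgraph
  have hmem (q : List Bool) (a : α) (ha : a ∈ dec q) : code a = q := hdec_code q a ha
  refine ⟨⟨fun q => (dec q).bind g, hdec.bind (hg.comp .snd).to₂, ?_⟩, fun a s hs => ?_⟩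
  · intro p hp q hq hpq
    obtain ⟨a, ha, -⟩ := Part.mem_bind_iff.1 (Part.dom_iff_mem.1 hp).choose_spec
    obtain ⟨b, hb, -⟩ := Part.mem_bind_iff.1 (Part.dom_iff_mem.1 hq).choose_spec
    rw [← hmem p a ha, ← hmem q b hb] at hpq ⊢
    rw [hinj a b hpq]
  · obtain ⟨b, hb⟩ := Part.dom_iff_mem.1 (hdom (code a) a rfl)
    obtain rfl : b = a := hinj b a (hmem _ _ hb ▸ List.prefix_rfl)
    exact Part.mem_bind hb hs

theorem IsOptimal.exists_H_le_length_code_add (hU : IsOptimal U) {α : Type*} [Primcodable α]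
    {code : α → List Bool} (hcode : Computable code) (hinj : ∀ a b, code a <+: code b → a = b)
    {g : α →. List Bool} (hg : Partrec g) :
    ∃ d : ℕ, ∀ a, ∀ s ∈ g a, H U s ≤ (code a).length + d := by
  obtain ⟨C, hC⟩ := exists_computer_of_prefix_code hcode hinj hg
  obtain ⟨d, hd⟩ := hU C
  refine ⟨d, fun a s hs => ?_⟩
  obtain ⟨p, hp, hsim⟩ := hd (code a) (Part.dom_iff_mem.2 ⟨s, hC a s hs⟩)
  exact (H_le_length (hsim s (hC a s hs))).trans hp

theorem IsOptimal.exists_mem (hU : IsOptimal U) (s : List Bool) : ∃ p, s ∈ U.f p := by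
  obtain ⟨C, hC⟩ := exists_computer_of_prefix_code (code := fun _ : Unit => []) (.const [])
    (fun _ _ _ => rfl) (Computable.const s).partrec
  obtain ⟨d, hd⟩ := hU C
  have hs := hC () s (Part.mem_some s)
  obtain ⟨p, -, hp⟩ := hd [] (Part.dom_iff_mem.2 ⟨s, hs⟩)
  exact ⟨p, hp s hs⟩

theorem IsOptimal.exists_length_eq_H (hU : IsOptimal U) (s : List Bool) :
    ∃ p : U.domain, (p : List Bool).length = H U s ∧ s ∈ U.f p := by
  obtain ⟨p, hp⟩ := hU.exists_mem s
  obtain ⟨q, hq, hs⟩ := Nat.sInf_mem (s := {n | ∃ p : List Bool, p.length = n ∧ s ∈ U.f p})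
    ⟨p.length, p, rfl, hp⟩
  exact ⟨⟨q, Part.dom_iff_mem.2 ⟨s, hs⟩⟩, hq, hs⟩

theorem IsOptimal.exists_H_le_H_add (hU : IsOptimal U) {g : List Bool →. List Bool}
    (hg : Partrec g) : ∃ d : ℕ, ∀ s, ∀ t ∈ g s, H U t ≤ H U s + d := by
  obtain ⟨d, hd⟩ := hU {
    f := fun p => (U.f p).bind g
    partrec := U.partrec.bind (hg.comp .snd).to₂
    prefixFree := fun p hp q hq => U.prefixFree p (Part.bind_dom.1 hp).1 q (Part.bind_dom.1 hq).1 }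
  refine ⟨d, fun s t ht => ?_⟩
  obtain ⟨p, hp, hs⟩ := hU.exists_length_eq_H s
  have hmem : t ∈ (U.f p).bind g := Part.mem_bind hs ht
  obtain ⟨q, hq, hsim⟩ := hd p (Part.dom_iff_mem.2 ⟨t, hmem⟩)
  exact (H_le_length (hsim t hmem)).trans (hp ▸ hq)

theorem IsOptimal.tsum_zterm_pos (hU : IsOptimal U) {T : ℝ} (hT₀ : 0 < T) (hT₁ : T ≤ 1) :
    0 < ∑' p, zterm U T p := by
  obtain ⟨p, hp⟩ := hU.exists_mem []
  exact (summable_zterm U hT₀ hT₁).tsum_pos (fun q => (zterm_pos U T q).le)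
    ⟨p, Part.dom_iff_mem.2 ⟨_, hp⟩⟩ (zterm_pos U T _)

end ProgramSize

section Enumeration

variable {U : Computer}

/-- A primitive recursive enumeration without repetition of the halting computations of `U`, as
pairs of a program and its output; steps at which no new computation halts return `none`. -/
structure Computer.Enumeration (U : Computer) where
  run : ℕ → Option (List Bool × List Bool)
  primrec : Primrec run
  mem_iff : ∀ p s, s ∈ U.f p ↔ ∃ n, run n = some (p, s)
  injective : ∀ m n x, run m = some x → run n = some x → m = n

theorem Computer.nonempty_enumeration (U : Computer) : Nonempty U.Enumeration := by
  obtain ⟨run, hrun, hmem, hinj⟩ :=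
    exists_primrec_injective_enumeration (rePred_mem_of_partrec U.partrec)
  exact ⟨run, hrun, fun p s => hmem (p, s), hinj⟩

namespace Computer.Enumeration

variable (E : U.Enumeration)

/-- The computations enumerated before step `k`. -/
def stage (k : ℕ) : List (List Bool × List Bool) := (List.range k).filterMap E.run

/-- The lengths of the programs enumerated before step `k`. -/
def lengths (k : ℕ) : List ℕ := (E.stage k).map fun x => x.1.length

/-- An upper bound for the lengths of the outputs enumerated before step `k`. -/
def outputBound (k : ℕ) : ℕ := ((E.stage k).map fun x => x.2.length).sum

open Classical in
/-- The set of programs enumerated before step `k`. -/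
noncomputable def programs (k : ℕ) : Finset U.domain :=
  ((E.stage k).map Prod.fst).toFinset.subtype (· ∈ U.domain)

theorem primrec_stage : Primrec E.stage :=
  Primrec.listFilterMap Primrec.list_range (E.primrec.comp .snd).to₂

theorem primrec_lengths : Primrec E.lengths :=
  Primrec.list_map E.primrec_stage
    (Primrec.list_length.comp (Primrec.fst.comp .snd)).to₂

theorem primrec_outputBound : Primrec E.outputBound :=
  primrec_list_sum.comp (Primrec.list_map E.primrec_stage
    (Primrec.list_length.comp (Primrec.snd.comp .snd)).to₂)

theorem mem_stage {k : ℕ} {x : List Bool × List Bool} :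
    x ∈ E.stage k ↔ ∃ n < k, E.run n = some x := by
  simp [stage]

theorem mem_of_mem_stage {k : ℕ} {p s : List Bool} (h : (p, s) ∈ E.stage k) : s ∈ U.f p := by
  obtain ⟨n, -, hn⟩ := E.mem_stage.1 h
  exact (E.mem_iff p s).2 ⟨n, hn⟩

theorem mem_programs {k : ℕ} {p : U.domain} :
    p ∈ E.programs k ↔ ∃ s, ((p : List Bool), s) ∈ E.stage k := by
  simp [programs]

theorem monotone_programs : Monotone E.programs := by
  intro k l hkl p hp
  obtain ⟨s, hs⟩ := E.mem_programs.1 hp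
  obtain ⟨n, hn, hrun⟩ := E.mem_stage.1 hs
  exact E.mem_programs.2 ⟨s, E.mem_stage.2 ⟨n, hn.trans_le hkl, hrun⟩⟩

theorem tendsto_programs : Tendsto E.programs atTop atTop := by
  refine tendsto_atTop_finset_of_monotone E.monotone_programs fun p => ?_
  obtain ⟨s, hs⟩ := Part.dom_iff_mem.1 p.2
  obtain ⟨n, hn⟩ := (E.mem_iff p s).1 hs
  exact ⟨n + 1, E.mem_programs.2 ⟨s, E.mem_stage.2 ⟨n, n.lt_succ_self, hn⟩⟩⟩

theorem nodup_programs (k : ℕ) : ((E.stage k).map Prod.fst).Nodup := by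
  refine List.Nodup.map_on ?_
    (List.nodup_range.filterMap fun m n x hm hn => E.injective m n x hm hn)
  rintro ⟨p, s⟩ hs ⟨q, t⟩ ht rfl
  rw [Part.mem_unique (E.mem_of_mem_stage hs) (E.mem_of_mem_stage ht)]

theorem length_le_outputBound {k : ℕ} {p : U.domain} (hp : p ∈ E.programs k) {s : List Bool}
    (hs : s ∈ U.f p) : s.length ≤ E.outputBound k := by
  obtain ⟨t, ht⟩ := E.mem_programs.1 hp
  obtain rfl := Part.mem_unique hs (E.mem_of_mem_stage ht)
  exact List.le_sum_of_mem (List.mem_map_of_mem ht)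

theorem exists_computable_not_mem_programs :
    ∃ f : ℕ → List Bool, Computable f ∧ ∀ k, ∀ p : U.domain, f k ∈ U.f p → p ∉ E.programs k := by
  refine ⟨fun k => (List.range (E.outputBound k + 1)).map fun _ => true, Primrec.to_comp ?_,
    fun k p hp hmem => ?_⟩
  · exact Primrec.list_map (Primrec.list_range.comp (Primrec.succ.comp E.primrec_outputBound))
      (Primrec.const true).to₂
  · have hlength := E.length_le_outputBound hmem hp
    rw [List.length_map, List.length_range] at hlength
    exact Nat.not_succ_le_self _ hlength

theorem boltzmannSum_lengths (T : ℝ) (k : ℕ) :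
    boltzmannSum T 0 (E.lengths k) = ∑ p ∈ E.programs k, zterm U T p := by
  classical
  have hdom : ∀ p ∈ ((E.stage k).map Prod.fst).toFinset, p ∈ U.domain := by
    intro p hp
    obtain ⟨⟨p, s⟩, hps, rfl⟩ := List.mem_map.1 (List.mem_toFinset.1 hp)
    exact Part.dom_iff_mem.2 ⟨s, E.mem_of_mem_stage hps⟩
  calc boltzmannSum T 0 (E.lengths k)
      = (((E.stage k).map Prod.fst).map fun p : List Bool => boltzmann T p.length).sum := by
        simp [boltzmannSum, lengths, Function.comp_def]
    _ = ∑ p ∈ ((E.stage k).map Prod.fst).toFinset, boltzmann T p.length :=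
        (List.sum_toFinset _ (E.nodup_programs k)).symm
    _ = ∑ p ∈ E.programs k, zterm U T p := by
        rw [programs]
        convert (Finset.sum_subtype_of_mem (fun p : List Bool => boltzmann T p.length) hdom).symm
        rfl

variable {T : ℝ}

theorem tendsto_boltzmannSum_lengths (hT₀ : 0 < T) (hT₁ : T ≤ 1) :
    Tendsto (fun k => boltzmannSum T 0 (E.lengths k)) atTop (nhds (∑' p, zterm U T p)) := by
  simp only [boltzmannSum_lengths]
  exact (summable_zterm U hT₀ hT₁).hasSum.comp E.tendsto_programs

theorem boltzmannSum_lengths_le (hT₀ : 0 < T) (hT₁ : T ≤ 1) (k : ℕ) :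
    boltzmannSum T 0 (E.lengths k) ≤ ∑' p, zterm U T p := by
  rw [boltzmannSum_lengths]
  exact (summable_zterm U hT₀ hT₁).sum_le_tsum _ fun p _ => (zterm_pos U T p).le

theorem zterm_add_boltzmannSum_lengths_le (hT₀ : 0 < T) (hT₁ : T ≤ 1) {k : ℕ} {p : U.domain}
    (hp : p ∉ E.programs k) :
    zterm U T p + boltzmannSum T 0 (E.lengths k) ≤ ∑' p, zterm U T p := by
  rw [boltzmannSum_lengths, ← Finset.sum_cons hp]
  exact (summable_zterm U hT₀ hT₁).sum_le_tsum _ fun p _ => (zterm_pos U T p).le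

theorem tsum_zterm_le_boltzmannSum_add_rpow (hT₀ : 0 < T) (hT₁ : T ≤ 1) (k : ℕ) :
    ∑' p, zterm U T p ≤ boltzmannSum T 0 (E.lengths k) +
      (∑' p, zterm U 1 p - boltzmannSum 1 0 (E.lengths k)) ^ (1 / T) := by
  simp only [boltzmannSum_lengths]
  exact tsum_zterm_le_sum_add_rpow U hT₀ hT₁ _

theorem primrec_map_two_pow_mul_add_lengths (j : ℕ) : Primrec fun y : (ℕ × ℕ) × ℕ =>
    (E.lengths y.2).map fun x => 2 ^ y.1.1 * x + j :=
  Primrec.list_map (E.primrec_lengths.comp .snd) (Primrec.nat_add.comp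
    (Primrec.nat_mul.comp (primrec_two_pow.comp (Primrec.fst.comp (Primrec.fst.comp .fst))) .snd)
    (.const j)).to₂

theorem rePred_boltzmann_lt (hT : ComputableReal T) (hT₀ : 0 < T) :
    REPred fun y : (ℕ × ℕ) × ℕ =>
      boltzmann T (y.1.2 / 2 ^ y.1.1) < boltzmannSum T 0 (E.lengths y.2) := by
  have hsingle : Primrec fun y : (ℕ × ℕ) × ℕ => [y.1.2] :=
    Primrec.list_cons.comp (Primrec.snd.comp .fst) (.const [])
  refine (rePred_comp (hT.rePred_boltzmannSum_lt hT₀) ((Primrec.fst.comp .fst).pair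
    (hsingle.pair (E.primrec_map_two_pow_mul_add_lengths 0))).to_comp).of_eq fun y => ?_
  rw [boltzmannSum_singleton, boltzmannSum_map_two_pow_mul_add, Nat.cast_zero, zero_div,
    boltzmann_zero, one_mul]

theorem rePred_mul_boltzmannSum_lt (hT : ComputableReal T) (hT₀ : 0 < T) :
    REPred fun y : (ℕ × ℕ) × ℕ => boltzmann T (1 / 2 ^ y.1.1) * boltzmannSum T 0 (E.lengths y.2) <
      boltzmann T (y.1.2 / 2 ^ y.1.1) := by
  have hsingle : Primrec fun y : (ℕ × ℕ) × ℕ => [y.1.2] :=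
    Primrec.list_cons.comp (Primrec.snd.comp .fst) (.const [])
  refine (rePred_comp (hT.rePred_boltzmannSum_lt hT₀) ((Primrec.fst.comp .fst).pair
    ((E.primrec_map_two_pow_mul_add_lengths 1).pair hsingle)).to_comp).of_eq fun y => ?_
  rw [boltzmannSum_singleton, boltzmannSum_map_two_pow_mul_add, Nat.cast_one]

theorem rePred_dyadic_lt_boltzmannSum_one : REPred fun y : (ℕ × ℕ) × ℕ =>
    (y.1.2 : ℝ) / 2 ^ y.1.1 < boltzmannSum 1 0 (E.lengths y.2) := by
  have hone : ComputableReal 1 := ⟨fun _ => 1, .const 1, fun n hn => by simp [Nat.lt_of_succ_le hn]⟩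
  have hreplicate : Primrec fun y : (ℕ × ℕ) × ℕ => (List.range y.1.2).map fun _ => y.1.1 :=
    Primrec.list_map (Primrec.list_range.comp (Primrec.snd.comp .fst))
      (Primrec.fst.comp (Primrec.fst.comp .fst)).to₂
  refine (rePred_comp (hone.rePred_boltzmannSum_lt one_pos) ((Primrec.const 0).pair
    (hreplicate.pair (E.primrec_lengths.comp .snd))).to_comp).of_eq fun y => ?_
  simp [boltzmannSum, boltzmann_one_natCast, div_eq_mul_inv]

end Computer.Enumeration

end Enumeration

section BinaryExpansions

/-- The number written in base two by a binary string, most significant bit first. -/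
def binaryValue (s : List Bool) : ℕ := s.foldl (fun m b => 2 * m + b.toNat) 0

/-- The last `n` base-two digits of `M`, most significant bit first. -/
def binaryDigits (n M : ℕ) : List Bool :=
  (List.range n).map fun i => decide (M / 2 ^ (n - 1 - i) % 2 = 1)

theorem primrec_binaryValue : Primrec binaryValue :=
  Primrec.list_foldl .id (.const 0) (Primrec.nat_add.comp
    (Primrec.nat_mul.comp (.const 2) (Primrec.fst.comp .snd))
    ((Primrec.dom_bool _).comp (Primrec.snd.comp .snd))).to₂

theorem primrec_binaryDigits : Primrec₂ binaryDigits := by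
  refine Primrec.list_map (Primrec.list_range.comp .fst) ?_
  have hexponent : Primrec fun z : (ℕ × ℕ) × ℕ => z.1.1 - 1 - z.2 :=
    Primrec.nat_sub.comp (Primrec.pred.comp (Primrec.fst.comp .fst)) .snd
  exact PrimrecPred.decide (Primrec.eq.comp (Primrec.nat_mod.comp (Primrec.nat_div.comp
    (Primrec.snd.comp .fst) (primrec_two_pow.comp hexponent)) (.const 2)) (.const 1))

theorem length_binaryDigits (n M : ℕ) : (binaryDigits n M).length = n := by
  simp [binaryDigits]

theorem length_bits (x : ℝ) (n : ℕ) : (bits x n).length = n := by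
  simp [bits]

theorem binaryDigits_succ (n M : ℕ) :
    binaryDigits (n + 1) M = binaryDigits n (M / 2) ++ [decide (M % 2 = 1)] := by
  have hdiv : ∀ i ∈ List.range n, M / 2 ^ (n + 1 - 1 - i) = M / 2 / 2 ^ (n - 1 - i) := by
    intro i hi
    rw [Nat.div_div_eq_div_mul, ← pow_succ']
    congr 2
    have := List.mem_range.1 hi
    omega
  rw [binaryDigits, List.range_succ, List.map_append]
  exact congr_arg₂ _ (List.map_congr_left fun i hi => by rw [hdiv i hi]) (by simp)

theorem binaryValue_binaryDigits (n M : ℕ) : binaryValue (binaryDigits n M) = M % 2 ^ n := by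
  induction n generalizing M with
  | zero => simp [binaryDigits, binaryValue, Nat.mod_one]
  | succ n ih =>
    have hbit : (decide (M % 2 = 1)).toNat = M % 2 := by
      rcases Nat.mod_two_eq_zero_or_one M with h | h <;> simp [h]
    have hstep : binaryValue (binaryDigits (n + 1) M) =
        2 * binaryValue (binaryDigits n (M / 2)) + M % 2 := by
      rw [binaryDigits_succ, binaryValue, List.foldl_concat, hbit, binaryValue]
    rw [hstep, ih, pow_succ', Nat.mod_mul, add_comm]

theorem floor_mul_two_pow_div (x : ℝ) (m k : ℕ) :
    ⌊x * 2 ^ (m + k)⌋₊ / 2 ^ k = ⌊x * 2 ^ m⌋₊ := by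
  rw [← Nat.floor_div_natCast, Nat.cast_pow, Nat.cast_ofNat, pow_add, ← mul_assoc,
    mul_div_cancel_right₀ _ (by positivity)]

theorem binDigit_succ {x : ℝ} (hx : 0 ≤ x) (n : ℕ) :
    binDigit x (n + 1) = decide (⌊x * 2 ^ (n + 1)⌋₊ % 2 = 1) := by
  have hfloor : (⌊x * 2 ^ (n + 1)⌋₊ : ℤ) =
      ⌊Int.fract x * 2 ^ (n + 1)⌋ + 2 * (⌊x⌋ * 2 ^ n) := by
    rw [Int.natCast_floor_eq_floor (by positivity), ← Int.floor_add_intCast]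
    congr 1
    push_cast
    rw [Int.fract]
    ring
  rw [binDigit, decide_eq_decide]
  omega

theorem bits_eq_binaryDigits {x : ℝ} (hx : 0 ≤ x) (n : ℕ) :
    bits x n = binaryDigits n ⌊x * 2 ^ n⌋₊ := by
  refine List.map_congr_left fun i hi => ?_
  have hn : n = (i + 1) + (n - 1 - i) := by
    have := List.mem_range.1 hi
    omega
  have hdiv := floor_mul_two_pow_div x (i + 1) (n - 1 - i)
  rw [← hn] at hdiv
  rw [binDigit_succ hx, hdiv]

theorem floor_mul_two_pow_eq {x : ℝ} (hx : 0 ≤ x) (n : ℕ) :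
    ⌊x * 2 ^ n⌋₊ = ⌊x⌋₊ * 2 ^ n + binaryValue (bits x n) := by
  have hdiv := floor_mul_two_pow_div x 0 n
  rw [zero_add, pow_zero, mul_one] at hdiv
  rw [bits_eq_binaryDigits hx, binaryValue_binaryDigits, ← hdiv, Nat.div_add_mod']

theorem exists_computable_floor_add_one {x : ℝ} (hx : 0 ≤ x) :
    ∃ f : List Bool → ℕ × ℕ, Computable f ∧ ∀ n, f (bits x n) = (n, ⌊x * 2 ^ n⌋₊ + 1) := by
  refine ⟨fun s => (s.length, ⌊x⌋₊ * 2 ^ s.length + binaryValue s + 1), Primrec.to_comp ?_,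
    fun n => ?_⟩
  · exact Primrec.list_length.pair <| Primrec.succ.comp <| Primrec.nat_add.comp
      (Primrec.nat_mul.comp (.const _) (primrec_two_pow.comp .list_length)) primrec_binaryValue
  · simp only [floor_mul_two_pow_eq hx, length_bits]

theorem lt_floor_add_one_div_two_pow (x : ℝ) (n : ℕ) : x < (⌊x * 2 ^ n⌋₊ + 1 : ℕ) / 2 ^ n := by
  rw [lt_div_iff₀ (by positivity), Nat.cast_succ]
  exact Nat.lt_floor_add_one _

theorem floor_add_one_div_two_pow_le {x : ℝ} (hx : 0 ≤ x) (n : ℕ) :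
    ((⌊x * 2 ^ n⌋₊ + 1 : ℕ) : ℝ) / 2 ^ n ≤ x + 1 / 2 ^ n := by
  rw [Nat.cast_succ, add_div, add_le_add_iff_right, div_le_iff₀ (by positivity)]
  exact Nat.floor_le (by positivity)

end BinaryExpansions

section FreeEnergy

/-- The free energy `F(T) = -T log₂ Z(T)`, with `Z(T)` the partition function of `U`. -/
noncomputable def freeEnergy (U : Computer) (T : ℝ) : ℝ := -T * Real.logb 2 (∑' p, zterm U T p)

variable {U : Computer} {T : ℝ}

theorem boltzmann_freeEnergy (hU : IsOptimal U) (hT₀ : 0 < T) (hT₁ : T ≤ 1) :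
    boltzmann T (freeEnergy U T) = ∑' p, zterm U T p :=
  boltzmann_neg_mul_logb hT₀.ne' (hU.tsum_zterm_pos hT₀ hT₁)

theorem freeEnergy_nonneg (hT₀ : 0 < T) (hT₁ : T ≤ 1) : 0 ≤ freeEnergy U T :=
  mul_nonneg_of_nonpos_of_nonpos (neg_nonpos.2 hT₀.le) <| Real.logb_nonpos one_lt_two
    (tsum_nonneg fun p => (zterm_pos U T p).le) (tsum_zterm_le_one U hT₀ hT₁)

theorem freeEnergy_lt_iff (hU : IsOptimal U) (E : U.Enumeration) (hT₀ : 0 < T) (hT₁ : T ≤ 1)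
    {x : ℝ} : freeEnergy U T < x ↔ ∃ k, boltzmann T x < boltzmannSum T 0 (E.lengths k) := by
  rw [← boltzmann_lt_boltzmann hT₀, boltzmann_freeEnergy hU hT₀ hT₁]
  refine ⟨fun h => ?_, fun ⟨k, hk⟩ => hk.trans_le (E.boltzmannSum_lengths_le hT₀ hT₁ k)⟩
  exact ((E.tendsto_boltzmannSum_lengths hT₀ hT₁).eventually_const_lt h).exists

theorem rightComputable_freeEnergy (hU : IsOptimal U) (hT : ComputableReal T) (hT₀ : 0 < T)
    (hT₁ : T ≤ 1) : RightComputable (freeEnergy U T) := by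
  obtain ⟨E⟩ := U.nonempty_enumeration
  refine RightComputable.of_rePred_lt (freeEnergy_nonneg hT₀ hT₁) ?_
  exact (rePred_exists (E.rePred_boltzmann_lt hT hT₀)).of_eq fun y =>
    (freeEnergy_lt_iff hU E hT₀ hT₁ (x := y.2 / 2 ^ y.1)).symm

end FreeEnergy

section WeakRandomness

variable {U : Computer} {T : ℝ}

theorem zterm_le_of_boltzmann_lt (hU : IsOptimal U) (E : U.Enumeration) (hT₀ : 0 < T)
    (hT₁ : T ≤ 1) {x ε : ℝ} (hx : x ≤ freeEnergy U T + ε) (hε : 0 ≤ ε) {k : ℕ}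
    (hk : boltzmann T x < boltzmannSum T 0 (E.lengths k)) {p : U.domain} (hp : p ∉ E.programs k) :
    zterm U T p ≤ ε / T := by
  have hZ₀ : 0 ≤ ∑' p, zterm U T p := tsum_nonneg fun p => (zterm_pos U T p).le
  have hlow : (∑' p, zterm U T p) * boltzmann T ε ≤ boltzmann T x := by
    rwa [← boltzmann_freeEnergy hU hT₀ hT₁, ← boltzmann_add, boltzmann_le_boltzmann hT₀]
  have htotal := E.zterm_add_boltzmannSum_lengths_le hT₀ hT₁ hp
  calc zterm U T p ≤ (∑' p, zterm U T p) * (1 - boltzmann T ε) := by linarith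
    _ ≤ (∑' p, zterm U T p) * (ε / T) :=
        mul_le_mul_of_nonneg_left (one_sub_boltzmann_le hT₀.le hε) hZ₀
    _ ≤ ε / T := mul_le_of_le_one_left (by positivity) (tsum_zterm_le_one U hT₀ hT₁)

theorem mul_add_le_length_of_zterm_le (hT₀ : 0 < T) {p : U.domain} {n : ℕ}
    (h : zterm U T p ≤ 1 / 2 ^ n / T) :
    T * n + T * Real.logb 2 T ≤ (p : List Bool).length := by
  have hlog := Real.logb_le_logb_of_le one_lt_two (zterm_pos U T p) h
  rw [zterm, Real.logb_rpow two_pos (by norm_num), Real.logb_div (by positivity) hT₀.ne', one_div,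
    Real.logb_inv, Real.logb_pow, Real.logb_self_eq_one one_lt_two, mul_one,
    div_le_iff₀ hT₀] at hlog
  linarith

theorem exists_partrec_mul_add_le_H (hU : IsOptimal U) (hT : ComputableReal T) (hT₀ : 0 < T)
    (hT₁ : T ≤ 1) : ∃ g : List Bool →. List Bool, Partrec g ∧
      ∀ n, ∃ t ∈ g (bits (freeEnergy U T) n), T * n + T * Real.logb 2 T ≤ H U t := by
  obtain ⟨E⟩ := U.nonempty_enumeration
  obtain ⟨findStage, hpartrec, hsound, hcomplete⟩ :=
    exists_partrec_choice (E.rePred_boltzmann_lt hT hT₀)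
  have hF : 0 ≤ freeEnergy U T := freeEnergy_nonneg hT₀ hT₁
  obtain ⟨upper, hupper, hbits⟩ := exists_computable_floor_add_one hF
  obtain ⟨output, houtput, hunattained⟩ := E.exists_computable_not_mem_programs
  refine ⟨fun s => (findStage (upper s)).map output,
    (hpartrec.comp hupper).map (houtput.comp .snd).to₂, fun n => ?_⟩
  obtain ⟨k₀, hk₀⟩ :=
    (freeEnergy_lt_iff hU E hT₀ hT₁).1 (lt_floor_add_one_div_two_pow (freeEnergy U T) n)
  obtain ⟨k, hk⟩ := Part.dom_iff_mem.1 (hcomplete (n, _) k₀ hk₀)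
  have hstage : boltzmann T ((⌊freeEnergy U T * 2 ^ n⌋₊ + 1 : ℕ) / 2 ^ n) <
      boltzmannSum T 0 (E.lengths k) := hsound (n, _) k hk
  obtain ⟨p, hp, hpk⟩ := hU.exists_length_eq_H (output k)
  have hkbits : k ∈ findStage (upper (bits (freeEnergy U T) n)) := by rwa [hbits]
  refine ⟨output k, Part.mem_map output hkbits, ?_⟩
  rw [← hp]
  have hzterm : zterm U T p ≤ 1 / 2 ^ n / T := 
    zterm_le_of_boltzmann_lt hU E hT₀ hT₁ (floor_add_one_div_two_pow_le hF n) (by positivity)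
      hstage (hunattained k p hpk)
  exact mul_add_le_length_of_zterm_le hT₀ hzterm

theorem weaklyChaitinRandom_freeEnergy (hU : IsOptimal U) (hT : ComputableReal T) (hT₀ : 0 < T)
    (hT₁ : T ≤ 1) : WeaklyChaitinRandom U T (freeEnergy U T) := by
  obtain ⟨g, hg, hgH⟩ := exists_partrec_mul_add_le_H hU hT hT₀ hT₁
  obtain ⟨d, hd⟩ := hU.exists_H_le_H_add hg
  refine ⟨d - T * Real.logb 2 T, fun n _ => ?_⟩
  obtain ⟨t, ht, hHt⟩ := hgH n
  have hH : (H U t : ℝ) ≤ H U (bits (freeEnergy U T) n) + d := mod_cast hd _ t ht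
  linarith

end WeakRandomness

section SelfDelimitingCodes

/-- The self-delimiting unary code of a natural number. -/
def unaryCode (n : ℕ) : List Bool := (List.range n).map (fun _ => true) ++ [false]

/-- A self-delimiting code of `n` whose length is only `O(√n)`: the two components of the pair coded
by `n` are written in unary. -/
def pairCode (n : ℕ) : List Bool := unaryCode n.unpair.1 ++ unaryCode n.unpair.2

/-- A prefix-free code for two numbers and a string, where only the string is not self-delimiting
and is therefore preceded by its length. -/
def prefixCode (x : (ℕ × ℕ) × List Bool) : List Bool :=
  pairCode x.1.1 ++ (pairCode x.1.2 ++ (pairCode x.2.length ++ x.2))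

theorem primrec_unaryCode : Primrec unaryCode :=
  Primrec.list_append.comp (Primrec.list_map .list_range (Primrec.const true).to₂) (.const [false])

theorem primrec_pairCode : Primrec pairCode :=
  Primrec.list_append.comp (primrec_unaryCode.comp (Primrec.fst.comp .unpair))
    (primrec_unaryCode.comp (Primrec.snd.comp .unpair))

theorem primrec_prefixCode : Primrec prefixCode :=
  Primrec.list_append.comp (primrec_pairCode.comp (Primrec.fst.comp .fst)) <|
    Primrec.list_append.comp (primrec_pairCode.comp (Primrec.snd.comp .fst)) <|
      Primrec.list_append.comp (primrec_pairCode.comp (Primrec.list_length.comp .snd)) .snd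

theorem unaryCode_append_prefix {m n : ℕ} {u v : List Bool}
    (h : unaryCode m ++ u <+: unaryCode n ++ v) : m = n ∧ u <+: v := by
  simp only [unaryCode, List.map_const', List.length_range] at h
  induction m generalizing n with
  | zero => cases n <;> simp_all [List.replicate_succ]
  | succ m ih =>
    cases n with
    | zero => simp [List.replicate_succ] at h
    | succ n => simpa using ih (by simpa [List.replicate_succ] using h)

theorem pairCode_append_prefix {m n : ℕ} {u v : List Bool}
    (h : pairCode m ++ u <+: pairCode n ++ v) : m = n ∧ u <+: v := by
  rw [pairCode, pairCode, List.append_assoc, List.append_assoc] at h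
  obtain ⟨hfst, h⟩ := unaryCode_append_prefix h
  obtain ⟨hsnd, h⟩ := unaryCode_append_prefix h
  exact ⟨by rw [← Nat.pair_unpair m, hfst, hsnd, Nat.pair_unpair], h⟩

theorem prefixCode_injective_of_prefix (x y : (ℕ × ℕ) × List Bool)
    (h : prefixCode x <+: prefixCode y) : x = y := by
  obtain ⟨hfst, h⟩ := pairCode_append_prefix h
  obtain ⟨hsnd, h⟩ := pairCode_append_prefix h
  obtain ⟨hlength, h⟩ := pairCode_append_prefix h
  exact Prod.ext (Prod.ext hfst hsnd) (h.eq_of_length hlength)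

theorem length_pairCode_le (n : ℕ) : (pairCode n).length ≤ 2 * √(n : ℝ) + 2 := by
  have hmax : (max n.unpair.1 n.unpair.2) ^ 2 ≤ n := by
    have := Nat.max_sq_add_min_le_pair n.unpair.1 n.unpair.2
    rw [Nat.pair_unpair] at this
    omega
  have hsqrt : ((max n.unpair.1 n.unpair.2 : ℕ) : ℝ) ≤ √(n : ℝ) :=
    Real.le_sqrt_of_sq_le (mod_cast hmax)
  have hfst : (n.unpair.1 : ℝ) ≤ _ := (Nat.cast_le.2 (le_max_left _ _)).trans hsqrt
  have hsnd : (n.unpair.2 : ℝ) ≤ _ := (Nat.cast_le.2 (le_max_right _ _)).trans hsqrt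
  simp only [pairCode, unaryCode, List.length_append, List.length_map, List.length_range,
    List.length_singleton]
  push_cast
  linarith

theorem length_prefixCode_le (n e : ℕ) (v : List Bool) : (prefixCode ((n, e), v)).length ≤
    v.length + 2 * √(n : ℝ) + 2 * √(v.length : ℝ) + (2 * √(e : ℝ) + 6) := by
  have hn := length_pairCode_le n
  have he := length_pairCode_le e
  have hv := length_pairCode_le v.length
  simp only [prefixCode, List.length_append]
  push_cast
  linarith

end SelfDelimitingCodes

section DyadicApproximation

variable {T : ℝ}

theorem one_sub_boltzmann_div_le (T x : ℝ) {n : ℕ} (hn : n ≠ 0) :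
    (1 - boltzmann T x) / n ≤ 1 - boltzmann T (x / n) := by
  have hn' : (n : ℝ) ≠ 0 := Nat.cast_ne_zero.2 hn
  have hpow : boltzmann T (x / n) ^ n = boltzmann T x := by
    rw [boltzmann_pow, mul_div_cancel₀ _ hn']
  have hbernoulli := one_add_mul_le_pow (a := boltzmann T (x / n) - 1)
    (by linarith [boltzmann_pos T (x / n)]) n
  rw [add_sub_cancel, hpow] at hbernoulli
  rw [div_le_iff₀ (by positivity)]
  linarith

theorem exists_nat_div_two_pow_lt_le {x : ℝ} (hx₀ : 0 < x) (hx₁ : x ≤ 1) (m : ℕ) :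
    ∃ N : ℕ, N < 2 ^ m ∧ (N : ℝ) / 2 ^ m < x ∧ x ≤ N / 2 ^ m + (1 / 2) ^ m := by
  have hpos : 0 < ⌈x * 2 ^ m⌉₊ := Nat.ceil_pos.2 (by positivity)
  obtain ⟨N, hN⟩ := Nat.exists_eq_succ_of_ne_zero hpos.ne'
  refine ⟨N, ?_, ?_, ?_⟩
  · rw [← Nat.succ_le_iff, ← hN, Nat.ceil_le, Nat.cast_pow, Nat.cast_ofNat]
    exact mul_le_of_le_one_left (by positivity) hx₁
  · rw [div_lt_iff₀ (by positivity), ← Nat.lt_ceil, hN]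
    exact N.lt_succ_self
  · rw [one_div_pow, ← add_div, le_div_iff₀ (by positivity), ← Nat.cast_succ, ← hN]
    exact Nat.le_ceil _

theorem exists_boltzmann_lt_lt (hT₀ : 0 < T) {z : ℝ} (hz₀ : 0 < z) (hz₁ : z ≤ 1) (n : ℕ) :
    ∃ a : ℕ, boltzmann T ((a + 1 : ℕ) / 2 ^ n) < z ∧
      boltzmann T (1 / 2 ^ n) * z < boltzmann T (a / 2 ^ n) := by
  set x := -T * Real.logb 2 z with hx
  have hx₀ : 0 ≤ x := mul_nonneg_of_nonpos_of_nonpos (neg_nonpos.2 hT₀.le)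
    (Real.logb_nonpos one_lt_two hz₀.le hz₁)
  have hpos : (0 : ℝ) < 1 / 2 ^ n := by positivity
  have hfloor : (⌊x * 2 ^ n⌋₊ : ℝ) / 2 ^ n ≤ x :=
    (div_le_iff₀ (by positivity)).2 (Nat.floor_le (by positivity))
  rw [← boltzmann_neg_mul_logb hT₀.ne' hz₀, ← hx]
  refine ⟨⌊x * 2 ^ n⌋₊, ?_, ?_⟩
  · exact (boltzmann_lt_boltzmann hT₀).2 (lt_floor_add_one_div_two_pow x n)
  · rw [← boltzmann_add, boltzmann_lt_boltzmann hT₀]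
    linarith

end DyadicApproximation

section Compressibility

variable {U : Computer} {T : ℝ}

theorem tsum_zterm_le_boltzmannSum_add_boltzmann (E : U.Enumeration) (hT₀ : 0 < T) (hT₁ : T ≤ 1)
    {k m : ℕ} (hk : ∑' p, zterm U 1 p ≤ boltzmannSum 1 0 (E.lengths k) + (1 / 2) ^ m) :
    ∑' p, zterm U T p ≤ boltzmannSum T 0 (E.lengths k) + boltzmann T m := by
  have hm : (boltzmann 1 m) ^ (1 / T) = boltzmann T m := by
    rw [boltzmann, boltzmann, div_one, ← Real.rpow_mul two_pos.le, mul_one_div]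
  rw [← boltzmann_one_natCast, add_comm, ← sub_le_iff_le_add] at hk
  refine (E.tsum_zterm_le_boltzmannSum_add_rpow hT₀ hT₁ k).trans ?_
  rw [← hm]
  gcongr
  exact sub_nonneg.2 (E.boltzmannSum_lengths_le one_pos le_rfl k)

theorem boltzmann_freeEnergy_add_le (hU : IsOptimal U) (E : U.Enumeration) (hT₀ : 0 < T)
    (hT₁ : T ≤ 1) {n m b k : ℕ}
    (hb : (1 / 2) ^ b ≤ (∑' p, zterm U T p) * (1 - boltzmann T 1)) (hm : T * (n + b) ≤ m)
    (hk : ∑' p, zterm U 1 p ≤ boltzmannSum 1 0 (E.lengths k) + (1 / 2) ^ m) :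
    boltzmann T (freeEnergy U T + 1 / 2 ^ n) ≤ boltzmannSum T 0 (E.lengths k) := by
  have hZ : 0 < ∑' p, zterm U T p := hU.tsum_zterm_pos hT₀ hT₁
  have htail : boltzmann T m ≤ (1 / 2) ^ b / 2 ^ n :=
    calc boltzmann T m ≤ boltzmann T (T * (n + b)) := (boltzmann_le_boltzmann hT₀).2 hm
      _ = (1 / 2) ^ b / 2 ^ n := by
        rw [boltzmann_mul_self hT₀.ne', ← Nat.cast_add, boltzmann_one_natCast, pow_add, one_div_pow,
          one_div_mul_eq_div]
  have hstep : (1 - boltzmann T 1) / 2 ^ n ≤ 1 - boltzmann T (1 / 2 ^ n) := by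
    simpa using one_sub_boltzmann_div_le T 1 (pow_ne_zero n two_ne_zero)
  rw [boltzmann_add, boltzmann_freeEnergy hU hT₀ hT₁]
  have hgap := calc boltzmann T m
      _ ≤ (∑' p, zterm U T p) * (1 - boltzmann T 1) / 2 ^ n := htail.trans (by gcongr)
      _ = (∑' p, zterm U T p) * ((1 - boltzmann T 1) / 2 ^ n) := mul_div_assoc _ _ _
      _ ≤ (∑' p, zterm U T p) * (1 - boltzmann T (1 / 2 ^ n)) := by gcongr
  linarith [tsum_zterm_le_boltzmannSum_add_boltzmann E hT₀ hT₁ hk]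

/-- The stage `k` of the enumeration and the number `a` are an acceptable answer to a search that is
given the precision `n` and the leading bits `v` of the halting probability `Z(1)`: at stage `k` the
partial sum of `Z(1)` exceeds the dyadic rational with digits `v`, and `a / 2 ^ n` is at distance
less than `2 ^ (-n)` from `-T log₂ Z_k`, for `Z_k` the partial sum of `Z(T)`. -/
def Computer.Enumeration.Approximates (E : U.Enumeration) (T : ℝ)
    (y : (ℕ × List Bool) × ℕ × ℕ) : Prop :=
  (binaryValue y.1.2 : ℝ) / 2 ^ y.1.2.length < boltzmannSum 1 0 (E.lengths y.2.1) ∧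
    boltzmann T ((y.2.2 + 1 : ℕ) / 2 ^ y.1.1) < boltzmannSum T 0 (E.lengths y.2.1) ∧
    boltzmann T (1 / 2 ^ y.1.1) * boltzmannSum T 0 (E.lengths y.2.1) <
      boltzmann T (y.2.2 / 2 ^ y.1.1)

theorem Computer.Enumeration.rePred_approximates (E : U.Enumeration) (hT : ComputableReal T)
    (hT₀ : 0 < T) : REPred (E.Approximates T) := by
  have hv : Primrec fun y : (ℕ × List Bool) × ℕ × ℕ => y.1.2 := Primrec.snd.comp .fst
  have hn : Primrec fun y : (ℕ × List Bool) × ℕ × ℕ => y.1.1 := Primrec.fst.comp .fst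
  have hk : Primrec fun y : (ℕ × List Bool) × ℕ × ℕ => y.2.1 := Primrec.fst.comp .snd
  have ha : Primrec fun y : (ℕ × List Bool) × ℕ × ℕ => y.2.2 := Primrec.snd.comp .snd
  have hlower := rePred_comp E.rePred_dyadic_lt_boltzmannSum_one
    (((Primrec.list_length.comp hv).pair (primrec_binaryValue.comp hv)).pair hk).to_comp
  have hupper := rePred_comp (E.rePred_boltzmann_lt hT hT₀)
    ((hn.pair (Primrec.succ.comp ha)).pair hk).to_comp
  have hstep := rePred_comp (E.rePred_mul_boltzmannSum_lt hT hT₀)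
    ((hn.pair ha).pair hk).to_comp
  exact rePred_and hlower (rePred_and hupper hstep)

theorem Computer.Enumeration.exists_approximates (hU : IsOptimal U) (E : U.Enumeration)
    (hT₀ : 0 < T) (hT₁ : T ≤ 1) (n : ℕ) {v : List Bool}
    (hv : (binaryValue v : ℝ) / 2 ^ v.length < ∑' p, zterm U 1 p) :
    ∃ x, E.Approximates T ((n, v), x) := by
  have hΩ := (E.tendsto_boltzmannSum_lengths one_pos le_rfl).eventually_const_lt hv
  have hZ := (E.tendsto_boltzmannSum_lengths hT₀ hT₁).eventually_const_lt
    (hU.tsum_zterm_pos hT₀ hT₁)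
  obtain ⟨k, hk, hpos⟩ := (hΩ.and hZ).exists
  obtain ⟨a, ha⟩ := exists_boltzmann_lt_lt hT₀ hpos
    ((E.boltzmannSum_lengths_le hT₀ hT₁ k).trans (tsum_zterm_le_one U hT₀ hT₁)) n
  exact ⟨(k, a), hk, ha⟩

theorem Computer.Enumeration.Approximates.exists_floor_eq_sub (hU : IsOptimal U)
    {E : U.Enumeration} (hT₀ : 0 < T) (hT₁ : T ≤ 1) {n b k a : ℕ} {v : List Bool}
    (hb : (1 / 2) ^ b ≤ (∑' p, zterm U T p) * (1 - boltzmann T 1)) (hn : T * (n + b) ≤ v.length)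
    (hv : ∑' p, zterm U 1 p ≤ binaryValue v / 2 ^ v.length + (1 / 2) ^ v.length)
    (h : E.Approximates T ((n, v), (k, a))) :
    ∃ e ≤ 2, ⌊freeEnergy U T * 2 ^ n⌋₊ = a - e := by
  obtain ⟨hΩ, hupper, hlower⟩ := h
  have hpow : (0 : ℝ) < 2 ^ n := by positivity
  have hF : 0 ≤ freeEnergy U T * 2 ^ n := mul_nonneg (freeEnergy_nonneg hT₀ hT₁) hpow.le
  have hle : ⌊freeEnergy U T * 2 ^ n⌋₊ < a + 1 :=
    (Nat.floor_lt hF).2 ((lt_div_iff₀ hpow).1 ((freeEnergy_lt_iff hU E hT₀ hT₁).2 ⟨k, hupper⟩))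
  have hge : boltzmann T (1 / 2 ^ n) * boltzmann T (freeEnergy U T + 1 / 2 ^ n) <
      boltzmann T (a / 2 ^ n) := by
    refine (mul_le_mul_of_nonneg_left ?_ (boltzmann_pos T _).le).trans_lt hlower
    exact boltzmann_freeEnergy_add_le hU E hT₀ hT₁ hb hn (hv.trans (by gcongr))
  rw [← boltzmann_add, boltzmann_lt_boltzmann hT₀, div_lt_iff₀ hpow, add_mul, add_mul,
    one_div_mul_cancel hpow.ne'] at hge
  have hfloor : a < ⌊freeEnergy U T * 2 ^ n⌋₊ + 3 := by
    have := Nat.lt_floor_add_one (freeEnergy U T * 2 ^ n)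
    exact_mod_cast (by push_cast; linarith :
      (a : ℝ) < (⌊freeEnergy U T * 2 ^ n⌋₊ + 3 : ℕ))
  exact ⟨a - ⌊freeEnergy U T * 2 ^ n⌋₊, by omega, by omega⟩

theorem exists_partrec_bits_freeEnergy_mem (hU : IsOptimal U) (hT : ComputableReal T) (hT₀ : 0 < T)
    (hT₁ : T ≤ 1) : ∃ g : (ℕ × ℕ) × List Bool →. List Bool, Partrec g ∧ ∃ b : ℕ, ∀ n m : ℕ,
      T * (n + b) ≤ m → ∃ e ≤ 2, ∃ v, v.length = m ∧ bits (freeEnergy U T) n ∈ g ((n, e), v) := by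
  obtain ⟨E⟩ := U.nonempty_enumeration
  obtain ⟨search, hsearch, hsound, hcomplete⟩ :=
    exists_partrec_choice (E.rePred_approximates hT hT₀)
  have hgap : 0 < (∑' p, zterm U T p) * (1 - boltzmann T 1) :=
    mul_pos (hU.tsum_zterm_pos hT₀ hT₁) <| sub_pos.2 <|
      ((boltzmann_lt_boltzmann hT₀).2 one_pos).trans_eq (boltzmann_zero T)
  obtain ⟨b, hb⟩ := exists_pow_lt_of_lt_one hgap one_half_lt_one
  have hinput : Primrec fun z : (ℕ × ℕ) × List Bool => (z.1.1, z.2) :=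
    (Primrec.fst.comp .fst).pair .snd
  have houtput : Primrec₂ fun (z : (ℕ × ℕ) × List Bool) (x : ℕ × ℕ) =>
      binaryDigits z.1.1 (x.2 - z.1.2) :=
    primrec_binaryDigits.comp (Primrec.fst.comp (Primrec.fst.comp .fst))
      (Primrec.nat_sub.comp (Primrec.snd.comp .snd) (Primrec.snd.comp (Primrec.fst.comp .fst)))
  refine ⟨_, (hsearch.comp hinput.to_comp).map houtput.to_comp, b, fun n m hm => ?_⟩
  obtain ⟨N, hN, hlt, hle⟩ := exists_nat_div_two_pow_lt_le
    (hU.tsum_zterm_pos one_pos le_rfl) (tsum_zterm_one_le_one U) m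
  obtain ⟨v, rfl, rfl⟩ : ∃ v : List Bool, v.length = m ∧ binaryValue v = N :=
    ⟨binaryDigits m N, length_binaryDigits m N, by
      rw [binaryValue_binaryDigits, Nat.mod_eq_of_lt hN]⟩
  obtain ⟨x₀, hx₀⟩ := E.exists_approximates hU hT₀ hT₁ n hlt
  obtain ⟨⟨k, a⟩, hx⟩ := Part.dom_iff_mem.1 (hcomplete (n, v) x₀ hx₀)
  obtain ⟨e, he, hfloor⟩ := (hsound (n, v) (k, a) hx).exists_floor_eq_sub hU hT₀ hT₁ hb.le hm hle
  refine ⟨e, he, v, rfl, ?_⟩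
  rw [bits_eq_binaryDigits (freeEnergy_nonneg hT₀ hT₁), hfloor]
  exact Part.mem_map _ hx

theorem exists_H_bits_freeEnergy_le (hU : IsOptimal U) (hT : ComputableReal T) (hT₀ : 0 < T)
    (hT₁ : T ≤ 1) : ∃ c : ℝ, ∀ n : ℕ,
      (H U (bits (freeEnergy U T) n) : ℝ) ≤ T * n + (4 * √n + c) := by
  obtain ⟨g, hg, b, hdecode⟩ := exists_partrec_bits_freeEnergy_mem hU hT hT₀ hT₁
  obtain ⟨d, hd⟩ := hU.exists_H_le_length_code_add primrec_prefixCode.to_comp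
    prefixCode_injective_of_prefix hg
  refine ⟨b + 2 * √(b + 1) + 2 * √2 + d + 7, fun n => ?_⟩
  obtain ⟨e, he, v, hlength, hmem⟩ := hdecode n ⌈T * (n + b)⌉₊ (Nat.le_ceil _)
  have hH : (H U (bits (freeEnergy U T) n) : ℝ) ≤ (prefixCode ((n, e), v)).length + d :=
    mod_cast hd _ _ hmem
  have hceil : (v.length : ℝ) < T * (n + b) + 1 := by
    rw [hlength]
    exact Nat.ceil_lt_add_one (by positivity)
  have hTb : T * b ≤ b := mul_le_of_le_one_left b.cast_nonneg hT₁
  have hTn : T * n ≤ n := mul_le_of_le_one_left n.cast_nonneg hT₁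
  have hsqrt_v : √(v.length : ℝ) ≤ √n + √(b + 1) := by
    refine Real.sqrt_le_iff.2 ⟨by positivity, ?_⟩
    rw [add_sq, Real.sq_sqrt n.cast_nonneg, Real.sq_sqrt (by positivity)]
    linarith [mul_nonneg (Real.sqrt_nonneg n) (Real.sqrt_nonneg (b + 1))]
  have hsqrt_e : √(e : ℝ) ≤ √2 := Real.sqrt_le_sqrt (mod_cast he)
  linarith [length_prefixCode_le n e v]

theorem DCompressible.of_le_mul_add {D x : ℝ} {r : ℕ → ℝ}
    (hr : Tendsto (fun n : ℕ => r n / n) atTop (nhds 0))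
    (h : ∀ n : ℕ, (H U (bits x n) : ℝ) ≤ D * n + r n) : DCompressible U D x := by
  have hlim : Tendsto (fun n : ℕ => D + r n / n) atTop (nhds D) := by
    simpa using hr.const_add D
  have hle : ∀ᶠ n : ℕ in atTop, (H U (bits x n) : ℝ) / n ≤ D + r n / n := by
    filter_upwards [eventually_gt_atTop 0] with n hn
    have hn : (0 : ℝ) < n := Nat.cast_pos.2 hn
    rw [div_le_iff₀ hn, add_mul, div_mul_cancel₀ _ hn.ne']
    exact h n
  have hbdd : IsCoboundedUnder (· ≤ ·) atTop fun n : ℕ => (H U (bits x n) : ℝ) / n :=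
    .of_frequently_ge (a := 0) (.of_forall fun n => by positivity)
  exact (limsup_le_limsup hle hbdd hlim.isBoundedUnder_le).trans_eq hlim.limsup_eq

theorem tendsto_mul_sqrt_add_div (a c : ℝ) :
    Tendsto (fun n : ℕ => (a * √n + c) / n) atTop (nhds 0) := by
  have hsqrt : Tendsto (fun n : ℕ => √(n : ℝ) / n) atTop (nhds 0) := by
    simp only [Real.sqrt_div_self]
    exact (Real.tendsto_sqrt_atTop.comp tendsto_natCast_atTop_atTop).inv_tendsto_atTop
  simpa [add_div, mul_div_assoc] using
    (hsqrt.const_mul a).add (tendsto_const_div_atTop_nhds_zero_nat c)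

theorem dCompressible_freeEnergy (hU : IsOptimal U) (hT : ComputableReal T) (hT₀ : 0 < T)
    (hT₁ : T ≤ 1) : DCompressible U T (freeEnergy U T) := by
  obtain ⟨c, h⟩ := exists_H_bits_freeEnergy_le hU hT hT₀ hT₁
  exact .of_le_mul_add (tendsto_mul_sqrt_add_div 4 c) h

end Compressibility

/-- **Theorem (paper Thm 9(i)).** For computable `T` with `0 < T ≤ 1`, `Z(T)`
converges to a positive real, and the free energy `F(T) = -T·log₂ Z(T)` is a
right-computable real which is weakly Chaitin `T`-random and `T`-compressible. -/
theorem freeEnergy_random_compressible (U : Computer) (hU : IsOptimal U)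
    (T : ℝ) (hT0 : 0 < T) (hT1 : T ≤ 1) (hTc : ComputableReal T) :
    Summable (zterm U T) ∧
    0 < ∑' p, zterm U T p ∧
    RightComputable (-T * Real.logb 2 (∑' p, zterm U T p)) ∧
    WeaklyChaitinRandom U T (-T * Real.logb 2 (∑' p, zterm U T p)) ∧
    DCompressible U T (-T * Real.logb 2 (∑' p, zterm U T p)) :=
  ⟨summable_zterm U hT0 hT1, hU.tsum_zterm_pos hT0 hT1,
    rightComputable_freeEnergy hU hTc hT0 hT1, weaklyChaitinRandom_freeEnergy hU hTc hT0 hT1,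
    dCompressible_freeEnergy hU hTc hT0 hT1⟩
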